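/- There exist constants c > 0, C > 0, and n₀ such that for all n ≥ n₀ the following holds. Let p be a prime with 2 < p ≤ exp(c·n^{1/4}), fix λ ∈ F_p, and set m = ⌈C·log p⌉. With probability at least 1 − exp(−n/9), every nonzero vector v ∈ F_p^n that is orthogonal (over F_p) to at least n − n/log p of the rows of M_n − λ·I_n has the following property: for every set T ⊆ {1,…,n} of size ⌈n/4⌉ there exist at least n/(2m) pairwise disjoint sets S ⊆ {1,…,n}∖T, each of size m, such that disc_{F_p}(v|_S) ≤ C/p². -/

import Mathlib

open Finset Matrix

noncomputable section

/-- The sign `±1` associated to a Boolean. -/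
def signb (R : Type*) [Ring R] (b : Bool) : R := if b then 1 else -1

open Classical in
/-- Uniform/counting probability of an event on a finite sample space. -/
def prob {Ω : Type*} [Fintype Ω] (E : Ω → Prop) : ℝ :=
  ((Finset.univ.filter E).card : ℝ) / (Fintype.card Ω : ℝ)

/-- The symmetric random sign matrix determined by the Boolean data `ω`
(only the entries `ω i j` with `i ≤ j` are used); it is uniformly distributed
over symmetric `±1` matrices when `ω` is uniform. -/
def symMat (R : Type*) [Ring R] {n : ℕ} (ω : Fin n → Fin n → Bool) :
    Matrix (Fin n) (Fin n) R :=
  Matrix.of fun i j => signb R (ω (min i j) (max i j))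

/-- Atom probability of a vector over `ZMod p` w.r.t. i.i.d. Rademacher signs. -/
def rho (p : ℕ) {ι : Type*} [Fintype ι] [DecidableEq ι] (w : ι → ZMod p) : ℝ :=
  ⨆ r : ZMod p, prob (fun ξ : ι → Bool => ∑ i, signb (ZMod p) (ξ i) * w i = r)

/-- Discrepancy of a vector over `ZMod p` w.r.t. i.i.d. Rademacher signs. -/
def disc (p : ℕ) {ι : Type*} [Fintype ι] [DecidableEq ι] (w : ι → ZMod p) : ℝ :=
  ⨆ x : ZMod p,
    |prob (fun ξ : ι → Bool => ∑ i, signb (ZMod p) (ξ i) * w i = x) - 1 / (p : ℝ)|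


/-- real part of the standard additive character -/
def cs (p : ℕ) [NeZero p] (x : ZMod p) : ℝ := (ZMod.stdAddChar x).re

lemma norm_e (p : ℕ) [NeZero p] (x : ZMod p) : ‖(ZMod.stdAddChar x : ℂ)‖ = 1 := by
  rw [ZMod.stdAddChar_apply]; exact Circle.norm_coe _

lemma e_neg (p : ℕ) [NeZero p] (x : ZMod p) :
    (ZMod.stdAddChar (-x) : ℂ) = (starRingEnd ℂ) (ZMod.stdAddChar x) := by
  rw [AddChar.map_neg_eq_conj]

lemma cs_sq (p : ℕ) [NeZero p] (x : ZMod p) :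
    (cs p x)^2 + (ZMod.stdAddChar x : ℂ).im^2 = 1 := by
  have h := norm_e p x
  have h2 := Complex.sq_norm (ZMod.stdAddChar x : ℂ)
  rw [h, Complex.normSq_apply] at h2
  unfold cs; nlinarith

lemma cs_zero (p : ℕ) [NeZero p] : cs p 0 = 1 := by simp [cs]

lemma cs_neg (p : ℕ) [NeZero p] (x : ZMod p) : cs p (-x) = cs p x := by
  unfold cs; rw [e_neg]; simp

lemma cs_add (p : ℕ) [NeZero p] (x y : ZMod p) :
    cs p (x + y) = cs p x * cs p y
      - (ZMod.stdAddChar x : ℂ).im * (ZMod.stdAddChar y : ℂ).im := by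
  unfold cs; rw [AddChar.map_add_eq_mul, Complex.mul_re]

lemma cs_sub (p : ℕ) [NeZero p] (x y : ZMod p) :
    cs p (x - y) = cs p x * cs p y
      + (ZMod.stdAddChar x : ℂ).im * (ZMod.stdAddChar y : ℂ).im := by
  rw [sub_eq_add_neg, cs_add, cs_neg, e_neg]; simp

lemma cs_le (p : ℕ) [NeZero p] (x : ZMod p) : cs p x ≤ 1 := by
  nlinarith [cs_sq p x, sq_nonneg (ZMod.stdAddChar x : ℂ).im]

lemma cs_ge (p : ℕ) [NeZero p] (x : ZMod p) : -1 ≤ cs p x := by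
  nlinarith [cs_sq p x, sq_nonneg (ZMod.stdAddChar x : ℂ).im]

lemma cs_mul (p : ℕ) [NeZero p] (x y : ZMod p) :
    cs p x * cs p y = (cs p (y + x) + cs p (y - x)) / 2 := by
  rw [cs_add, cs_sub]; ring

lemma cs_doubling (p : ℕ) [NeZero p] (x y : ZMod p) :
    1 - cs p (x + y) ≤ 2 * (1 - cs p x) + 2 * (1 - cs p y) := by
  rw [cs_add]
  have hx := cs_sq p x
  have hy := cs_sq p y
  set a := cs p x
  set b := cs p y
  set u := (ZMod.stdAddChar x : ℂ).im
  set w := (ZMod.stdAddChar y : ℂ).im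
  nlinarith [sq_nonneg (1 - a - (1 - b)), sq_nonneg (u - w), sq_nonneg (a + b - 2), sq_nonneg (u+w)]

lemma cs_abs (p : ℕ) [NeZero p] (x : ZMod p) :
    |cs p x| ≤ 3 / 4 + 1 / 4 * cs p (2 * x) := by
  rw [two_mul, cs_add]
  have hx := cs_sq p x
  rw [abs_le]
  constructor <;> nlinarith [sq_nonneg (cs p x - 1), sq_nonneg (cs p x + 1)]

lemma e_sum (p : ℕ) [Fact p.Prime] (x : ZMod p) :
    ∑ t : ZMod p, (ZMod.stdAddChar (t * x) : ℂ) = if x = 0 then (p : ℂ) else 0 := by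
  have h := AddChar.sum_mulShift x (ZMod.isPrimitive_stdAddChar p)
  rw [h]; simp [ZMod.card]

lemma cs_sum (p : ℕ) [Fact p.Prime] (x : ZMod p) :
    ∑ t : ZMod p, cs p (t * x) = if x = 0 then (p : ℝ) else 0 := by
  have h := congrArg Complex.re (e_sum p x)
  rw [Complex.re_sum] at h
  unfold cs; rw [h]; split_ifs <;> simp

/-- lazy factor -/
def lz (p : ℕ) [NeZero p] (t a : ZMod p) : ℝ := 3 / 4 + 1 / 4 * cs p (t * (2 * a))

lemma lz_le (p : ℕ) [NeZero p] (t a : ZMod p) : lz p t a ≤ 1 := by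
  unfold lz; linarith [cs_le p (t * (2 * a))]

lemma lz_pos (p : ℕ) [NeZero p] (t a : ZMod p) : 0 < lz p t a := by
  unfold lz; linarith [cs_ge p (t * (2 * a))]

/-- weight -/
def Wt (p : ℕ) [NeZero p] {ι : Type*} (S : Finset ι) (v : ι → ZMod p) (t : ZMod p) : ℝ :=
  ∏ j ∈ S, lz p t (v j)

lemma Wt_pos (p : ℕ) [NeZero p] {ι : Type*} (S : Finset ι) (v : ι → ZMod p) (t : ZMod p) :
    0 < Wt p S v t := Finset.prod_pos fun j _ => lz_pos p t (v j)

lemma Wt_le (p : ℕ) [NeZero p] {ι : Type*} (S : Finset ι) (v : ι → ZMod p) (t : ZMod p) :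
    Wt p S v t ≤ 1 :=
  Finset.prod_le_one (fun j _ => (lz_pos p t (v j)).le) fun j _ => lz_le p t (v j)

lemma Wt_mono (p : ℕ) [NeZero p] {ι : Type*} {S S' : Finset ι} (h : S ⊆ S')
    (v : ι → ZMod p) (t : ZMod p) : Wt p S' v t ≤ Wt p S v t :=
  by
  classical
  unfold Wt
  rw [← Finset.prod_sdiff h]
  exact mul_le_of_le_one_left (Wt_pos p S v t).le
    (Finset.prod_le_one (fun j _ => (lz_pos p t (v j)).le) fun j _ => lz_le p t (v j))

lemma Wt_zero (p : ℕ) [NeZero p] {ι : Type*} (S : Finset ι) (v : ι → ZMod p) :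
    Wt p S v 0 = 1 := by
  unfold Wt lz; simp [cs_zero]; norm_num

/-- centered return probability -/
def QQ (p : ℕ) [NeZero p] {ι : Type*} (S : Finset ι) (v : ι → ZMod p) (x : ZMod p) : ℝ :=
  (1 / (p : ℝ)) * ∑ t ∈ univ.erase (0 : ZMod p), Wt p S v t * cs p (t * x)

lemma QQ_congr (p : ℕ) [NeZero p] {ι : Type*} (S : Finset ι) (v u : ι → ZMod p)
    (h : ∀ i ∈ S, v i = u i) : QQ p S v = QQ p S u := by
  funext x
  unfold QQ Wt
  congr 1
  refine Finset.sum_congr rfl fun t _ => ?_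
  congr 1
  exact Finset.prod_congr rfl fun i hi => by rw [h i hi]

lemma QQ_mono (p : ℕ) [NeZero p] {ι : Type*} {S S' : Finset ι} (h : S ⊆ S')
    (v : ι → ZMod p) : QQ p S' v 0 ≤ QQ p S v 0 := by
  unfold QQ
  refine mul_le_mul_of_nonneg_left ?_ (by positivity)
  refine Finset.sum_le_sum fun t _ => ?_
  simp only [mul_zero, cs_zero, mul_one]
  exact Wt_mono p h v t

lemma QQ_pos (p : ℕ) [Fact p.Prime] {ι : Type*} (S : Finset ι) (v : ι → ZMod p) :
    0 < QQ p S v 0 := by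
  unfold QQ
  have hp : 0 < (p : ℝ) := by exact_mod_cast (Fact.out : p.Prime).pos
  refine mul_pos (by positivity) ?_
  refine Finset.sum_pos (fun t _ => ?_) ⟨1, by simp⟩
  simp only [mul_zero, cs_zero, mul_one]
  exact Wt_pos p S v t

lemma QQ_empty_le (p : ℕ) [Fact p.Prime] {ι : Type*} (v : ι → ZMod p) :
    QQ p ∅ v 0 ≤ 1 := by
  unfold QQ Wt
  have hp : 0 < (p : ℝ) := by exact_mod_cast (Fact.out : p.Prime).pos
  have hp1 : 1 ≤ p := (Fact.out : p.Prime).pos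
  simp only [mul_zero, cs_zero, mul_one, Finset.prod_empty, Finset.sum_const, nsmul_eq_mul,
    Finset.card_erase_of_mem (Finset.mem_univ _), Finset.card_univ, ZMod.card]
  rw [Nat.cast_sub hp1, one_div, inv_mul_le_iff₀ hp]
  push_cast; linarith

lemma QQ_insert (p : ℕ) [NeZero p] {ι : Type*} [DecidableEq ι] (S : Finset ι) (v : ι → ZMod p)
    (i : ι) (hi : i ∉ S) :
    QQ p (insert i S) v 0 = 3 / 4 * QQ p S v 0 + 1 / 4 * QQ p S v (2 * v i) := by
  unfold QQ
  rw [mul_left_comm, mul_left_comm (1/4 : ℝ), ← mul_add, Finset.mul_sum _ _ (3/4 : ℝ),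
    Finset.mul_sum _ _ (1/4 : ℝ), ← Finset.sum_add_distrib]
  congr 1
  refine Finset.sum_congr rfl fun t _ => ?_
  unfold Wt
  rw [Finset.prod_insert hi]
  simp only [mul_zero, cs_zero, mul_one]
  unfold lz; ring

/-- uncentered probability -/
def PP (p : ℕ) [NeZero p] {ι : Type*} (S : Finset ι) (v : ι → ZMod p) (x : ZMod p) : ℝ :=
  (1 / (p : ℝ)) * ∑ t : ZMod p, Wt p S v t * cs p (t * x)

lemma PP_eq (p : ℕ) [NeZero p] {ι : Type*} (S : Finset ι) (v : ι → ZMod p) (x : ZMod p) :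
    PP p S v x = QQ p S v x + 1 / p := by
  unfold PP QQ
  rw [← Finset.sum_erase_add _ _ (Finset.mem_univ (0 : ZMod p)), Wt_zero]
  simp [cs_zero]; ring

lemma PP_insert (p : ℕ) [NeZero p] {ι : Type*} [DecidableEq ι] (S : Finset ι) (v : ι → ZMod p)
    (i : ι) (hi : i ∉ S) (x : ZMod p) :
    PP p (insert i S) v x = 3 / 4 * PP p S v x +
      1 / 8 * (PP p S v (x + 2 * v i) + PP p S v (x - 2 * v i)) := by
  unfold PP
  have : ∀ a b c d : ℝ, 3/4 * (a * b) + 1/8*(a*c + a*d) = a * (3/4*b + (1/8*c + 1/8*d)) := by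
    intros; ring
  rw [this, Finset.mul_sum _ _ (3/4 : ℝ), Finset.mul_sum _ _ (1/8 : ℝ), Finset.mul_sum _ _ (1/8 : ℝ),
    ← Finset.sum_add_distrib, ← Finset.sum_add_distrib]
  congr 1
  refine Finset.sum_congr rfl fun t _ => ?_
  unfold Wt
  rw [Finset.prod_insert hi]
  unfold lz
  have h := cs_mul p (t * (2 * v i)) (t * x)
  rw [mul_add t, mul_sub t]
  set W := ∏ j ∈ S, (3 / 4 + 1 / 4 * cs p (t * (2 * v j)))
  linear_combination (1/4) * W * h

lemma PP_nonneg (p : ℕ) [Fact p.Prime] {ι : Type*} (S : Finset ι) (v : ι → ZMod p) :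
    ∀ x : ZMod p, 0 ≤ PP p S v x := by
  classical
  induction S using Finset.induction_on with
  | empty =>
    intro x
    unfold PP Wt
    simp only [Finset.prod_empty, one_mul]
    rw [cs_sum]
    split_ifs <;> positivity
  | insert i S hi ih =>
    intro x
    rw [PP_insert p S v i hi]
    have h1 := ih x
    have h2 := ih (x + 2 * v i)
    have h3 := ih (x - 2 * v i)
    linarith

lemma PP_sum (p : ℕ) [Fact p.Prime] {ι : Type*} (S : Finset ι) (v : ι → ZMod p) :
    ∑ x, PP p S v x = 1 := by
  unfold PP
  have hp : (p : ℝ) ≠ 0 := by exact_mod_cast (Fact.out : p.Prime).ne_zero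
  rw [← Finset.mul_sum, Finset.sum_comm]
  have : ∀ t : ZMod p, ∑ x : ZMod p, Wt p S v t * cs p (t * x) =
      if t = 0 then (p : ℝ) else 0 := by
    intro t
    rw [← Finset.mul_sum]
    have h := cs_sum p t
    simp_rw [mul_comm _ t] at h
    rw [h]
    split_ifs with h0
    · rw [h0, Wt_zero, one_mul]
    · simp
  simp_rw [this]
  simp [hp]

lemma QQ_doubling (p : ℕ) [NeZero p] {ι : Type*} (S : Finset ι) (v : ι → ZMod p) (x y : ZMod p) :
    QQ p S v 0 - QQ p S v (x + y) ≤
      2 * (QQ p S v 0 - QQ p S v x) + 2 * (QQ p S v 0 - QQ p S v y) := by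
  unfold QQ
  have : ∀ a b c d e : ℝ, a * b - a * c ≤ 2 * (a * b - a * d) + 2 * (a * b - a * e) ↔
     a * (b - c) ≤ a * (2 * (b - d) + 2 * (b - e)) := by
    intros; constructor <;> intro h <;> linarith
  rw [this]
  refine mul_le_mul_of_nonneg_left ?_ (by positivity)
  rw [← Finset.sum_sub_distrib, ← Finset.sum_sub_distrib, ← Finset.sum_sub_distrib, Finset.mul_sum,
    Finset.mul_sum, ← Finset.sum_add_distrib]
  refine Finset.sum_le_sum fun t _ => ?_
  have h := cs_doubling p (t * x) (t * y)
  have hW := (Wt_pos p S v t).le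
  rw [mul_add t, mul_zero, cs_zero]
  nlinarith [mul_le_mul_of_nonneg_left h hW]

/-- near-periods -/
def AA (p : ℕ) [NeZero p] {ι : Type*} (S : Finset ι) (v : ι → ZMod p) (η : ℝ) : Finset (ZMod p) :=
  univ.filter fun x => (1 - η) * QQ p S v 0 ≤ QQ p S v x

lemma AA_congr (p : ℕ) [NeZero p] {ι : Type*} (S : Finset ι) (v u : ι → ZMod p)
    (h : ∀ i ∈ S, v i = u i) (η : ℝ) : AA p S v η = AA p S u η := by
  unfold AA; rw [QQ_congr p S v u h]

lemma zero_mem_AA (p : ℕ) [Fact p.Prime] {ι : Type*} (S : Finset ι) (v : ι → ZMod p) {η : ℝ}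
    (hη : 0 ≤ η) : (0 : ZMod p) ∈ AA p S v η := by
  unfold AA
  simp only [Finset.mem_filter, Finset.mem_univ, true_and]
  nlinarith [QQ_pos p S v]

lemma AA_half (p : ℕ) [Fact p.Prime] {ι : Type*} (S : Finset ι) (v : ι → ZMod p) :
    ((AA p S v (1/2)).card : ℝ) * (QQ p S v 0 / 2 + 1 / p) ≤ 1 := by
  have h1 : ∑ x ∈ AA p S v (1/2), PP p S v x ≤ 1 := by
    rw [← PP_sum p S v]
    exact Finset.sum_le_sum_of_subset_of_nonneg (Finset.subset_univ _)
      fun x _ _ => PP_nonneg p S v x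
  refine le_trans ?_ h1
  rw [← nsmul_eq_mul]
  refine Finset.card_nsmul_le_sum _ _ _ fun x hx => ?_
  rw [PP_eq]
  unfold AA at hx
  simp only [Finset.mem_filter, Finset.mem_univ, true_and] at hx
  linarith

lemma AA_half_lt (p : ℕ) [Fact p.Prime] {ι : Type*} (S : Finset ι) (v : ι → ZMod p) :
    (AA p S v (1/2)).card < p := by
  have h := AA_half p S v
  have hQ := QQ_pos p S v
  have hp : 0 < (p : ℝ) := by exact_mod_cast (Fact.out : p.Prime).pos
  by_contra hcon
  push Not at hcon
  have : (p : ℝ) ≤ (AA p S v (1/2)).card := by exact_mod_cast hcon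
  have h2 : (p : ℝ) * (QQ p S v 0 / 2 + 1 / p) ≤ 1 :=
    le_trans (mul_le_mul_of_nonneg_right this (by positivity)) h
  have h3 : (p : ℝ) * (QQ p S v 0 / 2 + 1 / p) = p * QQ p S v 0 / 2 + 1 := by
    field_simp
  have : 0 < (p : ℝ) * QQ p S v 0 := by positivity
  linarith

open Pointwise in
lemma AA_double (p : ℕ) [Fact p.Prime] {ι : Type*} (S : Finset ι) (v : ι → ZMod p) (η : ℝ) :
    AA p S v η + AA p S v η ⊆ AA p S v (4 * η) := by
  intro z hz
  obtain ⟨x, hx, y, hy, rfl⟩ := Finset.mem_add.mp hz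
  unfold AA at *
  simp only [Finset.mem_filter, Finset.mem_univ, true_and] at *
  have := QQ_doubling p S v x y
  linarith

lemma AA_iter (p : ℕ) [Fact p.Prime] {ι : Type*} (S : Finset ι) (v : ι → ZMod p) {η : ℝ}
    (hη : 0 ≤ η) (j : ℕ) (h : (AA p S v (4 ^ j * η)).card < p) :
    2 ^ j * ((AA p S v η).card - 1) + 1 ≤ (AA p S v (4 ^ j * η)).card := by
  induction j with
  | zero =>
    have : 0 < (AA p S v η).card := Finset.card_pos.mpr ⟨0, zero_mem_AA p S v hη⟩
    simp only [pow_zero, one_mul]; omega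
  | succ j ih =>
    have e : (4 : ℝ) ^ (j + 1) * η = 4 * (4 ^ j * η) := by ring
    rw [e] at h ⊢
    have hη' : 0 ≤ 4 ^ j * η := by positivity
    have hne : (AA p S v (4 ^ j * η)).Nonempty := ⟨0, zero_mem_AA p S v hη'⟩
    have hcd := ZMod.cauchy_davenport (Fact.out : p.Prime) hne hne
    have hsub := Finset.card_le_card (AA_double p S v (4 ^ j * η))
    have hpos := hne.card_pos
    have := ih (by omega)
    have e2 : 2 ^ (j + 1) * ((AA p S v η).card - 1) = 2 * (2 ^ j * ((AA p S v η).card - 1)) := by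
      ring
    omega

lemma AA_card (p : ℕ) [Fact p.Prime] {ι : Type*} (S : Finset ι) (v : ι → ZMod p) (J : ℕ) :
    (AA p S v (1 / 2 / 4 ^ J)).card = 1 ∨
      ((AA p S v (1 / 2 / 4 ^ J)).card : ℝ) * 2 ^ J * (QQ p S v 0 + 1 / p) ≤ 4 := by
  have hη : (0 : ℝ) ≤ 1 / 2 / 4 ^ J := by positivity
  have e : (4 : ℝ) ^ J * (1 / 2 / 4 ^ J) = 1 / 2 := by field_simp
  have hlt := AA_half_lt p S v
  have h := AA_iter p S v hη J (by rw [e]; exact hlt)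
  rw [e] at h
  have hh := AA_half p S v
  have hQ := QQ_pos p S v
  have hp : 0 < (p : ℝ) := by exact_mod_cast (Fact.out : p.Prime).pos
  have hpos : 0 < (AA p S v (1 / 2 / 4 ^ J)).card :=
    Finset.card_pos.mpr ⟨0, zero_mem_AA p S v hη⟩
  by_cases h1 : (AA p S v (1 / 2 / 4 ^ J)).card = 1
  · exact Or.inl h1
  right
  have h2 : (AA p S v (1 / 2 / 4 ^ J)).card * 2 ^ J ≤ 2 * (AA p S v (1/2)).card := by
    set a := (AA p S v (1 / 2 / 4 ^ J)).card
    have : a ≤ 2 * (a - 1) := by omega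
    calc a * 2 ^ J ≤ 2 * (a - 1) * 2 ^ J := Nat.mul_le_mul_right _ this
      _ = 2 * (2 ^ J * (a - 1)) := by ring
      _ ≤ _ := by omega
  have h3 : ((AA p S v (1 / 2 / 4 ^ J)).card : ℝ) * 2 ^ J ≤ 2 * (AA p S v (1/2)).card := by
    exact_mod_cast h2
  have hpp : 0 < 1 / (p : ℝ) := by positivity
  have hc : (0 : ℝ) ≤ (AA p S v (1/2)).card := by positivity
  calc _ ≤ 2 * ((AA p S v (1/2)).card : ℝ) * (QQ p S v 0 + 1 / p) :=
        mul_le_mul_of_nonneg_right h3 (by positivity)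
    _ ≤ 4 := by nlinarith

lemma greedy_step (p : ℕ) [Fact p.Prime] {ι : Type*} [DecidableEq ι] (R : Finset ι)
    (v : ι → ZMod p) (η : ℝ) (hη1 : η ≤ 1) (k : ℕ) :
    ∃ S ⊆ R, S.card ≤ k ∧ (QQ p S v 0 ≤ (1 - η / 4) ^ k ∨ ∀ i ∈ R \ S, 2 * v i ∈ AA p S v η) := by
  induction k with
  | zero => exact ⟨∅, by simp, by simp, Or.inl (by simpa using QQ_empty_le p v)⟩
  | succ k ih =>
    obtain ⟨S, hS, hc, h⟩ := ih
    by_cases hst : ∀ i ∈ R \ S, 2 * v i ∈ AA p S v η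
    · exact ⟨S, hS, by omega, Or.inr hst⟩
    have h := h.resolve_right hst
    push Not at hst
    obtain ⟨i, hi, hA⟩ := hst
    rw [Finset.mem_sdiff] at hi
    refine ⟨insert i S, ?_, ?_, Or.inl ?_⟩
    · exact Finset.insert_subset hi.1 hS
    · rw [Finset.card_insert_of_notMem hi.2]; omega
    · rw [QQ_insert p S v i hi.2]
      unfold AA at hA
      simp only [Finset.mem_filter, Finset.mem_univ, true_and, not_le] at hA
      rw [pow_succ]
      have := mul_le_mul_of_nonneg_right h (show 0 ≤ 1 - η / 4 by linarith)
      linarith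

lemma greedy (p : ℕ) [Fact p.Prime] {ι : Type*} [DecidableEq ι] (R : Finset ι)
    (v : ι → ZMod p) (η : ℝ) (hη : 0 < η) (hη1 : η ≤ 1) (k : ℕ) (hk : 8 / η * Real.log p ≤ k) :
    ∃ S ⊆ R, S.card ≤ k ∧ (QQ p S v 0 ≤ 1 / (p : ℝ) ^ 2 ∨ ∀ i ∈ R \ S, 2 * v i ∈ AA p S v η) := by
  obtain ⟨S, hS, hc, h⟩ := greedy_step p R v η hη1 k
  refine ⟨S, hS, hc, h.imp_left fun h => h.trans ?_⟩
  have hp : 0 < (p : ℝ) := by exact_mod_cast (Fact.out : p.Prime).pos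
  have h1 : 1 - η / 4 ≤ Real.exp (-(η / 4)) := by
    have := Real.add_one_le_exp (-(η / 4)); linarith
  calc (1 - η / 4) ^ k ≤ (Real.exp (-(η / 4))) ^ k := pow_le_pow_left₀ (by linarith) h1 k
    _ = Real.exp (-(k * (η / 4))) := by rw [← Real.exp_nat_mul]; ring_nf
    _ ≤ Real.exp (-(2 * Real.log p)) := by
        apply Real.exp_le_exp.mpr
        have : 8 / η * Real.log p * (η / 4) ≤ k * (η / 4) :=
          mul_le_mul_of_nonneg_right hk (by positivity)
        have e : 8 / η * Real.log p * (η / 4) = 2 * Real.log p := by field_simp; ring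
        linarith
    _ = 1 / (p : ℝ) ^ 2 := by
        rw [Real.exp_neg, two_mul, Real.exp_add, Real.exp_log hp]; field_simp

lemma signb_e (p : ℕ) [NeZero p] (a : ZMod p) :
    ∑ b : Bool, (ZMod.stdAddChar (signb (ZMod p) b * a) : ℂ) = 2 * (cs p a : ℂ) := by
  rw [Fintype.sum_bool]
  simp only [signb, if_true, one_mul, Bool.false_eq_true, if_false, neg_mul, e_neg]
  rw [Complex.add_conj]; simp [cs]

lemma e_sum_prod (p : ℕ) [NeZero p] {ι : Type*} (s : Finset ι) (f : ι → ZMod p) :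
    (ZMod.stdAddChar (∑ i ∈ s, f i) : ℂ) = ∏ i ∈ s, (ZMod.stdAddChar (f i) : ℂ) := by
  classical
  induction s using Finset.induction_on with
  | empty => simp
  | insert a s ha ih =>
    rw [Finset.sum_insert ha, Finset.prod_insert ha, AddChar.map_add_eq_mul, ih]

open Classical in
lemma count_fourier (p : ℕ) [Fact p.Prime] {ι : Type*} [Fintype ι] [DecidableEq ι] (w : ι → ZMod p) (x : ZMod p) :
    ((univ.filter fun ξ : ι → Bool => ∑ i, signb (ZMod p) (ξ i) * w i = x).card : ℂ) * p =
      2 ^ Fintype.card ι * ∑ t : ZMod p, (ZMod.stdAddChar (-(t * x)) : ℂ) * ∏ i, (cs p (t * w i) : ℂ) := by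
  have h1 : ((univ.filter fun ξ : ι → Bool => ∑ i, signb (ZMod p) (ξ i) * w i = x).card : ℂ) * p =
      ∑ ξ : ι → Bool, ∑ t : ZMod p,
        (ZMod.stdAddChar (t * (∑ i, signb (ZMod p) (ξ i) * w i - x)) : ℂ) := by
    simp_rw [e_sum, sub_eq_zero]
    rw [← Finset.sum_filter, Finset.sum_const, nsmul_eq_mul]
  rw [h1, Finset.sum_comm, Finset.mul_sum]
  refine Finset.sum_congr rfl fun t _ => ?_
  have h2 : ∀ ξ : ι → Bool, (ZMod.stdAddChar (t * (∑ i, signb (ZMod p) (ξ i) * w i - x)) : ℂ) =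
      ZMod.stdAddChar (-(t * x)) * ∏ i, (ZMod.stdAddChar (signb (ZMod p) (ξ i) * (t * w i)) : ℂ) := by
    intro ξ
    rw [← e_sum_prod, ← AddChar.map_add_eq_mul]
    congr 1
    rw [mul_sub, Finset.mul_sum, sub_eq_add_neg, add_comm]
    congr 1
    exact Finset.sum_congr rfl fun i _ => by ring
  simp_rw [h2]
  rw [← Finset.mul_sum]
  have h3 := Finset.prod_univ_sum (fun _ : ι => (univ : Finset Bool))
    (fun i b => (ZMod.stdAddChar (signb (ZMod p) b * (t * w i)) : ℂ))
  rw [Fintype.piFinset_univ] at h3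
  rw [← h3]
  simp_rw [signb_e]
  rw [Finset.prod_mul_distrib, Finset.prod_const, Finset.card_univ]
  ring

lemma atom_bound (p : ℕ) [Fact p.Prime] {ι : Type*} [Fintype ι] [DecidableEq ι] (w : ι → ZMod p) (x : ZMod p) :
    |prob (fun ξ : ι → Bool => ∑ i, signb (ZMod p) (ξ i) * w i = x) - 1 / (p : ℝ)|
      ≤ QQ p univ w 0 := by
  have hp : 0 < (p : ℝ) := by exact_mod_cast (Fact.out : p.Prime).pos
  have hpc : (p : ℂ) ≠ 0 := by exact_mod_cast (Fact.out : p.Prime).ne_zero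
  have hF := count_fourier p w x
  have h1 : ((prob (fun ξ : ι → Bool => ∑ i, signb (ZMod p) (ξ i) * w i = x) - 1 / (p : ℝ) : ℝ) : ℂ)
     = (1 / (p : ℂ)) * ∑ t ∈ univ.erase (0 : ZMod p),
        (ZMod.stdAddChar (-(t * x)) : ℂ) * ∏ i, (cs p (t * w i) : ℂ) := by
    rw [← Finset.sum_erase_add _ _ (Finset.mem_univ (0 : ZMod p))] at hF
    simp only [zero_mul, neg_zero, AddChar.map_zero_eq_one, cs_zero, Complex.ofReal_one,
      Finset.prod_const_one, mul_one] at hF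
    generalize (∑ t ∈ univ.erase (0 : ZMod p),
        (ZMod.stdAddChar (-(t * x)) : ℂ) * ∏ i, (cs p (t * w i) : ℂ)) = Z at hF ⊢
    unfold prob
    push_cast
    rw [Fintype.card_fun, Fintype.card_bool]
    push_cast
    field_simp
    rw [hF]
    ring
  rw [← Real.norm_eq_abs, ← Complex.norm_real, h1, norm_mul]
  unfold QQ
  have : ‖1 / (p : ℂ)‖ = 1 / (p : ℝ) := by simp
  rw [this]
  refine mul_le_mul_of_nonneg_left ?_ (by positivity)
  refine (norm_sum_le _ _).trans (Finset.sum_le_sum fun t _ => ?_)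
  rw [norm_mul, norm_e, one_mul, mul_zero, cs_zero, mul_one, norm_prod]
  unfold Wt
  refine Finset.prod_le_prod (fun _ _ => norm_nonneg _) fun i _ => ?_
  rw [Complex.norm_real, Real.norm_eq_abs]
  unfold lz
  have := cs_abs p (t * w i)
  rwa [mul_left_comm] at this

lemma disc_bound (p : ℕ) [Fact p.Prime] {ι : Type*} [DecidableEq ι] (S : Finset ι)
    (v : ι → ZMod p) : disc p (fun i : S => v i) ≤ QQ p S v 0 := by
  unfold disc
  refine ciSup_le fun x => ?_
  refine (atom_bound p (fun i : S => v i) x).trans (le_of_eq ?_)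
  unfold QQ Wt
  congr 1
  refine Finset.sum_congr rfl fun t _ => ?_
  congr 1
  exact Finset.prod_coe_sort S (fun i => lz p t (v i))

open Classical in
lemma atom_S (p : ℕ) [Fact p.Prime] {ι : Type*} [Fintype ι] [DecidableEq ι] (S : Finset ι)
    (v : ι → ZMod p) (x : ZMod p) :
    ((univ.filter fun ξ : ι → Bool => ∑ i ∈ S, signb (ZMod p) (ξ i) * v i = x).card : ℝ)
      ≤ 2 ^ Fintype.card ι * (QQ p S v 0 + 1 / p) := by
  have h := atom_bound p (fun i => if i ∈ S then v i else 0) x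
  have e : QQ p univ (fun i => if i ∈ S then v i else 0) 0 = QQ p S v 0 := by
    unfold QQ Wt
    congr 1
    refine Finset.sum_congr rfl fun t _ => ?_
    congr 1
    rw [← Finset.prod_subset (Finset.subset_univ S)]
    · exact Finset.prod_congr rfl fun i hi => by simp [hi]
    · intro i _ hi; simp [hi, lz, cs_zero]; norm_num
  rw [e] at h
  have h2 := (abs_le.mp h).2
  unfold prob at h2
  rw [Fintype.card_fun, Fintype.card_bool] at h2
  simp only [mul_ite, mul_zero, Finset.sum_ite_mem, Finset.univ_inter] at h2
  push_cast at h2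
  rw [sub_le_iff_le_add, div_le_iff₀ (by positivity)] at h2
  rw [mul_comm]; exact h2

/-- resample the entries between `S` and its complement -/
def flipS {n : ℕ} (S : Finset (Fin n)) (ξ ω : Fin n → Fin n → Bool) : Fin n → Fin n → Bool :=
  fun a b => if a ∉ S ∧ b ∈ S then xor (ω a b) (ξ a b)
    else if b ∉ S ∧ a ∈ S then xor (ω a b) (ξ b a) else ω a b

lemma flipS_invol {n : ℕ} (S : Finset (Fin n)) (ξ : Fin n → Fin n → Bool) :
    Function.Involutive (flipS S ξ) := by
  intro ω
  funext a b
  unfold flipS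
  by_cases h1 : a ∉ S ∧ b ∈ S
  · simp [h1]
  · by_cases h2 : b ∉ S ∧ a ∈ S
    · simp [h2]
    · simp only [h1, h2, if_false]

lemma symMat_flipS (p : ℕ) {n : ℕ} (S : Finset (Fin n)) (ξ ω : Fin n → Fin n → Bool)
    (i : Fin n) (hi : i ∉ S) (j : Fin n) :
    symMat (ZMod p) (flipS S ξ ω) i j =
      if j ∈ S then signb (ZMod p) (xor (ω (min i j) (max i j)) (ξ i j))
      else symMat (ZMod p) ω i j := by
  unfold symMat flipS
  simp only [Matrix.of_apply]
  rcases le_total i j with h | h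
  · simp only [min_eq_left h, max_eq_right h]
    by_cases hj : j ∈ S <;> simp [hi, hj]
  · simp only [min_eq_right h, max_eq_left h]
    by_cases hj : j ∈ S <;> simp [hi, hj]

lemma row_flipS (p : ℕ) {n : ℕ} (lam : ZMod p) (v : Fin n → ZMod p)
    (S : Finset (Fin n)) (ξ ω : Fin n → Fin n → Bool) (i : Fin n) (hi : i ∉ S) :
    ((symMat (ZMod p) (flipS S ξ ω) - lam • (1 : Matrix (Fin n) (Fin n) (ZMod p))) *ᵥ v) i =
      ∑ j ∈ S, signb (ZMod p) (xor (ω (min i j) (max i j)) (ξ i j)) * v j +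
      (∑ j ∈ Sᶜ, symMat (ZMod p) ω i j * v j - lam * v i) := by
  rw [Matrix.sub_mulVec, Matrix.smul_mulVec, Matrix.one_mulVec]
  simp only [Pi.sub_apply, Pi.smul_apply, smul_eq_mul, Matrix.mulVec, dotProduct]
  rw [← Finset.sum_add_sum_compl S, add_sub_assoc]
  congr 1
  · exact Finset.sum_congr rfl fun j hj => by rw [symMat_flipS p S ξ ω i hi]; simp [hj]
  · congr 1
    refine Finset.sum_congr rfl fun j hj => ?_
    rw [symMat_flipS p S ξ ω i hi]
    simp [Finset.mem_compl.mp hj]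

lemma row_count (p : ℕ) [Fact p.Prime] {n : ℕ} (v : Fin n → ZMod p)
    (S : Finset (Fin n)) (w : Fin n → Bool) (d : ZMod p) (x q : ℝ) (hx : 0 ≤ x)
    (hq : QQ p S v 0 + 1 / p ≤ q) :
    ∑ b : Fin n → Bool, (if ∑ j ∈ S, signb (ZMod p) (xor (w j) (b j)) * v j + d = 0 then (1 : ℝ) else x)
      ≤ 2 ^ n * (q + x) := by
  have hinv : Function.Involutive (fun b : Fin n → Bool => fun j => xor (w j) (b j)) := by
    intro b; funext j; simp
  have h1 := Equiv.sum_comp hinv.toPerm (fun b : Fin n → Bool =>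
    (if ∑ j ∈ S, signb (ZMod p) (b j) * v j + d = 0 then (1 : ℝ) else x))
  simp only [Function.Involutive.coe_toPerm] at h1
  refine le_of_eq_of_le h1 ?_
  have h2 : ∀ b : Fin n → Bool, (if ∑ j ∈ S, signb (ZMod p) (b j) * v j + d = 0 then (1 : ℝ) else x)
      ≤ (if ∑ j ∈ S, signb (ZMod p) (b j) * v j = -d then (1 : ℝ) else 0) + x := by
    intro b
    simp only [add_eq_zero_iff_eq_neg]
    split_ifs <;> linarith
  refine (Finset.sum_le_sum fun b _ => h2 b).trans ?_
  rw [Finset.sum_add_distrib, Finset.sum_boole, Finset.sum_const, Finset.card_univ,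
    Fintype.card_fun, Fintype.card_bool, Fintype.card_fin, nsmul_eq_mul, mul_add]
  push_cast
  have h3 := atom_S p S v (-d)
  rw [Fintype.card_fin] at h3
  have h4 : (2 : ℝ) ^ n * (QQ p S v 0 + 1 / p) ≤ 2 ^ n * q :=
    mul_le_mul_of_nonneg_left hq (by positivity)
  have h5 : (2 : ℝ) ^ n * (QQ p S v 0 + 1 / p) ≤ 2 ^ n * q := h4
  refine add_le_add (le_trans ?_ (h3.trans h4)) le_rfl
  convert le_refl _

/-- orthogonality event -/
def orthE (p : ℕ) {n : ℕ} (lam : ZMod p) (B : ℝ) (v : Fin n → ZMod p)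
    (ω : Fin n → Fin n → Bool) : Prop :=
  (n : ℝ) - B ≤ ({i | ((symMat (ZMod p) ω
      - lam • (1 : Matrix (Fin n) (Fin n) (ZMod p))) *ᵥ v) i = 0}.ncard : ℝ)

lemma moment (p : ℕ) [Fact p.Prime] {n : ℕ} (lam : ZMod p) (v : Fin n → ZMod p)
    (S : Finset (Fin n)) (x q : ℝ) (hx : 0 ≤ x) (hq : QQ p S v 0 + 1 / p ≤ q) :
    ∑ ω : Fin n → Fin n → Bool, ∏ i, (if i ∈ S then (1 : ℝ) else
      if ((symMat (ZMod p) ω - lam • (1 : Matrix (Fin n) (Fin n) (ZMod p))) *ᵥ v) i = 0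
        then 1 else x)
      ≤ (Fintype.card (Fin n → Fin n → Bool) : ℝ) * (q + x) ^ (n - S.card) := by
  set F : (Fin n → Fin n → Bool) → ℝ := fun ω => ∏ i, (if i ∈ S then (1 : ℝ) else
      if ((symMat (ZMod p) ω - lam • (1 : Matrix (Fin n) (Fin n) (ZMod p))) *ᵥ v) i = 0
        then 1 else x) with hF
  have hq0 : 0 ≤ q := by
    have := QQ_pos p S v
    have : 0 ≤ 1 / (p : ℝ) := by positivity
    linarith
  have key : ∀ ω, ∑ ξ, F (flipS S ξ ω) ≤
      (Fintype.card (Fin n → Fin n → Bool) : ℝ) * (q + x) ^ (n - S.card) := by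
    intro ω
    set g : Fin n → (Fin n → Bool) → ℝ := fun i b => if i ∈ S then 1 else
      if ∑ j ∈ S, signb (ZMod p) (xor (ω (min i j) (max i j)) (b j)) * v j +
        (∑ j ∈ Sᶜ, symMat (ZMod p) ω i j * v j - lam * v i) = 0 then 1 else x with hg
    have e1 : ∀ ξ, F (flipS S ξ ω) = ∏ i, g i (ξ i) := by
      intro ξ
      simp only [hF, hg]
      refine Finset.prod_congr rfl fun i _ => ?_
      by_cases hi : i ∈ S
      · simp [hi]
      · simp only [hi, if_false]
        rw [row_flipS p lam v S ξ ω i hi]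
    simp_rw [e1]
    have h3 := Finset.prod_univ_sum (fun _ : Fin n => (univ : Finset (Fin n → Bool))) g
    rw [Fintype.piFinset_univ] at h3
    rw [← h3]
    have h4 : ∀ i, ∑ b, g i b ≤ 2 ^ n * (if i ∈ S then 1 else (q + x)) := by
      intro i
      by_cases hi : i ∈ S
      · simp [hg, hi]
      · simp only [hg, hi, if_false]
        exact row_count p v S _ _ x q hx hq
    refine (Finset.prod_le_prod (fun i _ => ?_) fun i _ => h4 i).trans ?_
    · refine Finset.sum_nonneg fun b _ => ?_
      simp only [hg]
      split_ifs <;> linarith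
    · rw [Finset.prod_mul_distrib, Finset.prod_const, Finset.card_univ, Fintype.card_fin,
        Fintype.card_fun, Fintype.card_fun, Fintype.card_bool, Fintype.card_fin]
      push_cast
      refine mul_le_mul_of_nonneg_left (le_of_eq ?_) (by positivity)
      rw [Finset.prod_ite, Finset.prod_const_one, one_mul, Finset.prod_const]
      congr 1
      have : (univ.filter fun i => i ∉ S) = Sᶜ := by ext; simp
      rw [this, Finset.card_compl, Fintype.card_fin]
  have hsum : ∑ ω, ∑ ξ, F (flipS S ξ ω) = (Fintype.card (Fin n → Fin n → Bool) : ℝ) * ∑ ω, F ω := by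
    rw [Finset.sum_comm]
    have : ∀ ξ, ∑ ω, F (flipS S ξ ω) = ∑ ω, F ω := fun ξ =>
      Equiv.sum_comp (flipS_invol S ξ).toPerm F
    simp_rw [this]
    rw [Finset.sum_const, Finset.card_univ, nsmul_eq_mul]
  have h5 : ∑ ω, ∑ ξ, F (flipS S ξ ω) ≤ (Fintype.card (Fin n → Fin n → Bool) : ℝ) *
      ((Fintype.card (Fin n → Fin n → Bool) : ℝ) * (q + x) ^ (n - S.card)) := by
    refine (Finset.sum_le_sum fun ω _ => key ω).trans ?_
    rw [Finset.sum_const, Finset.card_univ, nsmul_eq_mul]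
  rw [hsum] at h5
  have hcard : (0 : ℝ) < (Fintype.card (Fin n → Fin n → Bool) : ℝ) := by
    exact_mod_cast Fintype.card_pos
  exact le_of_mul_le_mul_left h5 hcard

lemma orth_prob (p : ℕ) [Fact p.Prime] {n : ℕ} (lam : ZMod p) (v : Fin n → ZMod p)
    (S : Finset (Fin n)) (x q B : ℝ) (hx : 0 < x) (hx1 : x ≤ 1) (hq : QQ p S v 0 + 1 / p ≤ q) :
    prob (orthE p lam B v) * x ^ B ≤ (q + x) ^ (n - S.card) := by
  classical
  have hcard : (0 : ℝ) < (Fintype.card (Fin n → Fin n → Bool) : ℝ) := by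
    exact_mod_cast Fintype.card_pos
  have hm := moment p lam v S x q hx.le hq
  unfold prob
  rw [div_mul_eq_mul_div, div_le_iff₀ hcard, mul_comm ((q + x) ^ _)]
  refine le_trans ?_ hm
  rw [← nsmul_eq_mul]
  refine le_trans (Finset.card_nsmul_le_sum _ (fun ω => ∏ i, (if i ∈ S then (1 : ℝ) else
      if ((symMat (ZMod p) ω - lam • (1 : Matrix (Fin n) (Fin n) (ZMod p))) *ᵥ v) i = 0
        then 1 else x)) _ fun ω hω => ?_) (Finset.sum_le_sum_of_subset_of_nonneg
          (Finset.subset_univ _) fun ω _ _ => ?_)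
  · simp only [Finset.mem_filter, Finset.mem_univ, true_and, orthE] at hω
    have h1 : ∏ i, (if ((symMat (ZMod p) ω - lam • (1 : Matrix (Fin n) (Fin n) (ZMod p))) *ᵥ v) i = 0
        then 1 else x) ≤ ∏ i, (if i ∈ S then (1 : ℝ) else
      if ((symMat (ZMod p) ω - lam • (1 : Matrix (Fin n) (Fin n) (ZMod p))) *ᵥ v) i = 0
        then 1 else x) := by
      refine Finset.prod_le_prod (fun i _ => ?_) fun i _ => ?_
      · split_ifs <;> linarith
      · split_ifs <;> linarith
    refine le_trans ?_ h1
    rw [Finset.prod_ite, Finset.prod_const_one, one_mul, Finset.prod_const, ← Real.rpow_natCast]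
    refine Real.rpow_le_rpow_of_exponent_ge hx hx1 ?_
    rw [Set.ncard_eq_toFinset_card', Set.toFinset_ofPred] at hω
    have h2 := Finset.card_filter_add_card_filter_not (s := (univ : Finset (Fin n)))
      (fun i => ((symMat (ZMod p) ω - lam • (1 : Matrix (Fin n) (Fin n) (ZMod p))) *ᵥ v) i = 0)
    rw [Finset.card_univ, Fintype.card_fin] at h2
    have h3 : ((univ.filter fun i => ((symMat (ZMod p) ω - lam • (1 : Matrix (Fin n) (Fin n) (ZMod p))) *ᵥ v) i = 0).card : ℝ)
      + ((univ.filter fun i => ¬ ((symMat (ZMod p) ω - lam • (1 : Matrix (Fin n) (Fin n) (ZMod p))) *ᵥ v) i = 0).card : ℝ) = n := by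
      exact_mod_cast h2
    linarith
  · refine Finset.prod_nonneg fun i _ => ?_
    split_ifs <;> linarith

lemma chunk {n : ℕ} (T : Finset (Fin n)) (m : ℕ) (hm : 1 ≤ m) (P : Finset (Fin n) → Prop)
    (hno : ¬ ∃ 𝒮 : Finset (Finset (Fin n)), (𝒮 : Set (Finset (Fin n))).PairwiseDisjoint id ∧
      (∀ S ∈ 𝒮, S.card = m ∧ Disjoint S T ∧ P S) ∧ (n : ℝ) / (2 * m) ≤ (𝒮.card : ℝ)) :
    ∃ R : Finset (Fin n), (n : ℝ) - T.card - n / 2 ≤ R.card ∧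
      ∀ S ⊆ R, S.card = m → ¬ P S := by
  classical
  set FF : Finset (Finset (Finset (Fin n))) := univ.filter fun 𝒮 =>
    (𝒮 : Set (Finset (Fin n))).PairwiseDisjoint id ∧
      (∀ S ∈ 𝒮, S.card = m ∧ Disjoint S T ∧ P S) with hFF
  have hne : FF.Nonempty := ⟨∅, by simp [hFF]⟩
  obtain ⟨𝒮, h𝒮, hmax⟩ := Finset.exists_max_image FF Finset.card hne
  have h𝒮' := h𝒮
  simp only [hFF, Finset.mem_filter, Finset.mem_univ, true_and] at h𝒮'
  obtain ⟨hd, hp⟩ := h𝒮'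
  have hlt : (𝒮.card : ℝ) < (n : ℝ) / (2 * m) := by
    by_contra h
    exact hno ⟨𝒮, hd, hp, not_lt.mp h⟩
  have hm0 : (0 : ℝ) < m := by exact_mod_cast hm
  have hU : ((𝒮.biUnion id).card : ℝ) ≤ n / 2 := by
    have h1 : (𝒮.biUnion id).card ≤ 𝒮.card * m :=
      Finset.card_biUnion_le_card_mul _ _ _ fun S hS => (hp S hS).1.le
    have h2 : ((𝒮.biUnion id).card : ℝ) ≤ 𝒮.card * m := by exact_mod_cast h1
    rw [lt_div_iff₀ (by positivity)] at hlt
    linarith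
  refine ⟨(T ∪ 𝒮.biUnion id)ᶜ, ?_, ?_⟩
  · have h1 := Finset.card_union_le T (𝒮.biUnion id)
    have h2 := Finset.card_add_card_compl (T ∪ 𝒮.biUnion id)
    rw [Fintype.card_fin] at h2
    have h3 : (n : ℝ) ≤ T.card + (𝒮.biUnion id).card + ((T ∪ 𝒮.biUnion id)ᶜ).card := by
      exact_mod_cast (by omega)
    linarith
  · intro S hS hc hPS
    have hST : Disjoint S T := by
      rw [Finset.disjoint_left]
      intro a ha haT
      have := Finset.mem_compl.mp (hS ha)
      exact this (Finset.mem_union_left _ haT)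
    have hSU : ∀ S' ∈ 𝒮, Disjoint S S' := by
      intro S' hS'
      rw [Finset.disjoint_left]
      intro a ha haT
      have := Finset.mem_compl.mp (hS ha)
      exact this (Finset.mem_union_right _ (Finset.mem_biUnion.mpr ⟨S', hS', haT⟩))
    have hn : S ∉ 𝒮 := by
      intro hmem
      have := hSU S hmem
      rw [disjoint_self] at this
      rw [this] at hc
      simp at hc; omega
    have hin : insert S 𝒮 ∈ FF := by
      simp only [hFF, Finset.mem_filter, Finset.mem_univ, true_and]
      refine ⟨?_, ?_⟩
      · rw [Finset.coe_insert]
        refine hd.insert fun S' hS' _ => hSU S' hS'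
      · intro S' hS'
        rcases Finset.mem_insert.mp hS' with h | h
        · rw [h]; exact ⟨hc, hST, hPS⟩
        · exact hp S' h
    have := hmax _ hin
    rw [Finset.card_insert_of_notMem hn] at this
    omega

lemma prob_eq {Ω : Type*} [Fintype Ω] (E : Ω → Prop) [DecidablePred E] :
    prob E = ((univ.filter E).card : ℝ) / (Fintype.card Ω : ℝ) := by
  unfold prob; congr

lemma prob_nonneg {Ω : Type*} [Fintype Ω] (E : Ω → Prop) : 0 ≤ prob E := by
  unfold prob; positivity

lemma prob_mono {Ω : Type*} [Fintype Ω] {E F : Ω → Prop} (h : ∀ ω, E ω → F ω) :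
    prob E ≤ prob F := by
  classical
  unfold prob
  refine div_le_div_of_nonneg_right ?_ (by positivity)
  exact_mod_cast Finset.card_le_card fun ω hω => by
    simp only [Finset.mem_filter, Finset.mem_univ, true_and] at hω ⊢
    exact h ω hω

lemma prob_or {Ω : Type*} [Fintype Ω] (E F : Ω → Prop) :
    prob (fun ω => E ω ∨ F ω) ≤ prob E + prob F := by
  classical
  rw [prob_eq E, prob_eq F, prob_eq, ← add_div]
  refine div_le_div_of_nonneg_right ?_ (by positivity)
  rw [Finset.filter_or]
  exact_mod_cast Finset.card_union_le _ _

lemma prob_not {Ω : Type*} [Fintype Ω] [Nonempty Ω] (E : Ω → Prop) :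
    prob E = 1 - prob (fun ω => ¬ E ω) := by
  classical
  have hcard : (0 : ℝ) < (Fintype.card Ω : ℝ) := by exact_mod_cast Fintype.card_pos
  rw [prob_eq E, prob_eq (fun ω => ¬ E ω)]
  have h2 := Finset.card_filter_add_card_filter_not (s := (univ : Finset Ω)) E
  rw [Finset.card_univ] at h2
  have h3 : ((univ.filter E).card : ℝ) + ((univ.filter fun ω => ¬ E ω).card : ℝ) = Fintype.card Ω := by
    exact_mod_cast h2
  rw [eq_sub_iff_add_eq, ← add_div, h3, div_self hcard.ne']

lemma prob_exists_mem {Ω A : Type*} [Fintype Ω] (V : Finset A) (E : A → Ω → Prop) :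
    prob (fun ω => ∃ a ∈ V, E a ω) ≤ ∑ a ∈ V, prob (E a) := by
  classical
  simp_rw [prob_eq]
  rw [← Finset.sum_div]
  refine div_le_div_of_nonneg_right ?_ (by positivity)
  have : (univ.filter fun ω => ∃ a ∈ V, E a ω) ⊆ V.biUnion fun a => univ.filter (E a) := by
    intro ω hω
    simp only [Finset.mem_filter, Finset.mem_univ, true_and, Finset.mem_biUnion] at hω ⊢
    exact hω
  exact_mod_cast (Finset.card_le_card this).trans Finset.card_biUnion_le

lemma prob_exists_card {Ω A : Type*} [Fintype Ω] [Fintype A] (E : A → Ω → Prop) (N : ℝ)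
    (h : ∀ a, prob (E a) ≤ N) :
    prob (fun ω => ∃ a, E a ω) ≤ Fintype.card A * N := by
  have h1 := prob_exists_mem (univ : Finset A) E
  simp only [Finset.mem_univ, true_and] at h1
  refine h1.trans ((Finset.sum_le_sum fun a _ => h a).trans ?_)
  rw [Finset.sum_const, Finset.card_univ, nsmul_eq_mul]

lemma fiber_sum (p : ℕ) [Fact p.Prime] (hp2 : 2 < p) {n : ℕ} (S R : Finset (Fin n)) (hSR : S ⊆ R)
    (η : ℝ) (hη : 0 ≤ η)
    (V : Finset (Fin n → ZMod p)) (hV : ∀ v ∈ V, ∀ i ∈ R \ S, 2 * v i ∈ AA p S v η)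
    (f : (Fin n → ZMod p) → ℝ) (M : ℝ) (hM : 0 ≤ M)
    (hf : ∀ v ∈ V, f v * (((AA p S v η).card : ℝ) ^ (R \ S).card * (p : ℝ) ^ (n - R.card)) ≤ M) :
    ∑ v ∈ V, f v ≤ (p : ℝ) ^ S.card * M := by
  classical
  have hp : 0 < (p : ℝ) := by exact_mod_cast (Fact.out : p.Prime).pos
  have h20 : (2 : ZMod p) ≠ 0 := by
    intro h
    have h' : ((2 : ℕ) : ZMod p) = 0 := by exact_mod_cast h
    rw [ZMod.natCast_eq_zero_iff] at h'
    exact absurd (Nat.le_of_dvd (by norm_num) h') (by omega)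
  set U : Finset (Fin n → ZMod p) :=
    Fintype.piFinset fun i => if i ∈ S then (univ : Finset (ZMod p)) else {0} with hU
  set π : (Fin n → ZMod p) → (Fin n → ZMod p) := fun v i => if i ∈ S then v i else 0 with hπ
  have hmaps : ∀ v ∈ V, π v ∈ U := by
    intro v _
    simp only [hU, hπ, Fintype.mem_piFinset]
    intro i
    by_cases hi : i ∈ S <;> simp [hi]
  have hUc : U.card = p ^ S.card := by
    rw [hU, Fintype.card_piFinset]
    have : ∀ i, (if i ∈ S then (univ : Finset (ZMod p)) else {0}).card = if i ∈ S then p else 1 := by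
      intro i
      by_cases hi : i ∈ S <;> simp [hi, ZMod.card]
    simp_rw [this]
    rw [Finset.prod_ite, Finset.prod_const_one, mul_one, Finset.prod_const]
    congr 2
    ext; simp
  rw [← Finset.sum_fiberwise_of_maps_to hmaps f]
  have key : ∀ u ∈ U, ∑ v ∈ V with π v = u, f v ≤ M := by
    intro u _
    set D : ℝ := ((AA p S u η).card : ℝ) ^ (R \ S).card * (p : ℝ) ^ (n - R.card) with hD
    have hApos : 0 < (AA p S u η).card := Finset.card_pos.mpr ⟨0, zero_mem_AA p S u hη⟩
    have hDpos : 0 < D := by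
      have : (0 : ℝ) < (AA p S u η).card := by exact_mod_cast hApos
      positivity
    have hAA : ∀ v, π v = u → AA p S v η = AA p S u η := by
      intro v hv
      refine AA_congr p S v u (fun i hi => ?_) η
      rw [← hv]; simp [hπ, hi]
    have h1 : ∀ v ∈ V.filter (fun v => π v = u), f v ≤ M / D := by
      intro v hv
      rw [Finset.mem_filter] at hv
      have := hf v hv.1
      rw [hAA v hv.2] at this
      rw [le_div_iff₀ hDpos]; exact this
    have h2 : V.filter (fun v => π v = u) ⊆ Fintype.piFinset fun i =>
        if i ∈ S then {u i} else if i ∈ R then (AA p S u η).image (fun z => 2⁻¹ * z) else univ := by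
      intro v hv
      rw [Finset.mem_filter] at hv
      rw [Fintype.mem_piFinset]
      intro i
      by_cases hi : i ∈ S
      · simp only [hi, if_true, Finset.mem_singleton]
        rw [← hv.2]; simp [hπ, hi]
      · by_cases hR : i ∈ R
        · simp only [hi, hR, if_false, if_true, Finset.mem_image]
          refine ⟨2 * v i, ?_, ?_⟩
          · rw [← hAA v hv.2]
            exact hV v hv.1 i (Finset.mem_sdiff.mpr ⟨hR, hi⟩)
          · rw [← mul_assoc, inv_mul_cancel₀ h20, one_mul]
        · simp [hi, hR]
    have h3 : ((V.filter (fun v => π v = u)).card : ℝ) ≤ D := by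
      have h4 := Finset.card_le_card h2
      rw [Fintype.card_piFinset] at h4
      have h5 : ∏ i, (if i ∈ S then {u i} else if i ∈ R then (AA p S u η).image (fun z => 2⁻¹ * z)
          else (univ : Finset (ZMod p))).card ≤ ∏ i, ((if i ∈ R \ S then (AA p S u η).card else 1) *
            (if i ∈ Rᶜ then p else 1)) := by
        refine Finset.prod_le_prod' fun i _ => ?_
        by_cases hi : i ∈ S
        · have := hSR hi
          simp [hi, this]
        · by_cases hR : i ∈ R
          · simp only [hi, hR, if_false, if_true, Finset.mem_sdiff, Finset.mem_compl, not_true,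
              not_false_iff, and_self, mul_one]
            exact Finset.card_image_le
          · simp [hi, hR, ZMod.card]
      rw [Finset.prod_mul_distrib, Finset.prod_ite_mem, Finset.prod_ite_mem, Finset.univ_inter,
        Finset.univ_inter, Finset.prod_const, Finset.prod_const, Finset.card_compl,
        Fintype.card_fin] at h5
      rw [hD]
      exact_mod_cast h4.trans h5
    refine (Finset.sum_le_card_nsmul _ _ _ h1).trans ?_
    rw [nsmul_eq_mul]
    calc _ ≤ D * (M / D) := mul_le_mul_of_nonneg_right h3 (by positivity)
      _ = M := by field_simp
  refine (Finset.sum_le_card_nsmul _ _ _ key).trans ?_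
  rw [nsmul_eq_mul, hUc]
  push_cast; exact le_rfl

lemma sparse_count (p : ℕ) [Fact p.Prime] {n : ℕ} (m : ℕ) (V : Finset (Fin n → ZMod p))
    (hV : ∀ v ∈ V, (univ.filter fun i => v i ≠ 0).card ≤ m) :
    (V.card : ℝ) ≤ (101 / 100 : ℝ) ^ n * (100 * p) ^ m := by
  classical
  have hp : 0 < (p : ℝ) := by exact_mod_cast (Fact.out : p.Prime).pos
  have hp1 : 1 ≤ (p : ℝ) := by exact_mod_cast (Fact.out : p.Prime).pos
  set y : ℝ := 1 / (100 * p) with hy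
  have hy0 : 0 < y := by positivity
  have hy1 : y ≤ 1 := by
    rw [hy, div_le_one (by positivity)]; linarith
  have h3 := Finset.prod_univ_sum (fun _ : Fin n => (univ : Finset (ZMod p)))
    (fun _ a => if a = 0 then (1 : ℝ) else y)
  rw [Fintype.piFinset_univ] at h3
  have h4 : ∑ a : ZMod p, (if a = 0 then (1 : ℝ) else y) ≤ 101 / 100 := by
    have : ∀ a : ZMod p, (if a = 0 then (1 : ℝ) else y) ≤ (if a = 0 then (1 : ℝ) else 0) + y := by
      intro a; split_ifs <;> linarith
    refine (Finset.sum_le_sum fun a _ => this a).trans ?_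
    rw [Finset.sum_add_distrib, Finset.sum_ite_eq', Finset.sum_const, Finset.card_univ, ZMod.card]
    simp only [Finset.mem_univ, if_true, nsmul_eq_mul]
    have : (p : ℝ) * y = 1 / 100 := by rw [hy]; field_simp
    linarith
  have h5 : (V.card : ℝ) * y ^ m ≤ (101 / 100 : ℝ) ^ n := by
    calc (V.card : ℝ) * y ^ m = V.card • (y ^ m) := by rw [nsmul_eq_mul]
      _ ≤ ∑ v ∈ V, ∏ i, (if v i = 0 then (1 : ℝ) else y) := by
          refine Finset.card_nsmul_le_sum _ _ _ fun v hv => ?_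
          rw [Finset.prod_ite, Finset.prod_const_one, one_mul, Finset.prod_const]
          exact pow_le_pow_of_le_one hy0.le hy1 (hV v hv)
      _ ≤ ∑ v : Fin n → ZMod p, ∏ i, (if v i = 0 then (1 : ℝ) else y) := by
          refine Finset.sum_le_sum_of_subset_of_nonneg (Finset.subset_univ _) fun v _ _ => ?_
          refine Finset.prod_nonneg fun i _ => ?_
          split_ifs <;> linarith
      _ = ∏ _i : Fin n, ∑ a : ZMod p, (if a = 0 then (1 : ℝ) else y) := h3.symm
      _ ≤ ∏ _i : Fin n, (101 / 100 : ℝ) := by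
          refine Finset.prod_le_prod (fun i _ => ?_) fun i _ => h4
          refine Finset.sum_nonneg fun a _ => ?_
          split_ifs <;> linarith
      _ = (101 / 100 : ℝ) ^ n := by rw [Finset.prod_const, Finset.card_univ, Fintype.card_fin]
  have h6 : y ^ m * (100 * p) ^ m = 1 := by
    rw [← mul_pow, hy, one_div, inv_mul_cancel₀ (by positivity), one_pow]
  calc (V.card : ℝ) = V.card * y ^ m * (100 * p) ^ m := by rw [mul_assoc, h6, mul_one]
    _ ≤ _ := mul_le_mul_of_nonneg_right h5 (by positivity)

lemma PP_zero_le (p : ℕ) [Fact p.Prime] {ι : Type*} (S : Finset ι) (v : ι → ZMod p) :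
    QQ p S v 0 + 1 / p ≤ 1 := by
  rw [← PP_eq, ← PP_sum p S v]
  exact Finset.single_le_sum (fun x _ => PP_nonneg p S v x) (Finset.mem_univ 0)

lemma PP_single (p : ℕ) [Fact p.Prime] (hp2 : 2 < p) {ι : Type*} [DecidableEq ι] (v : ι → ZMod p)
    (i : ι) (hi : v i ≠ 0) : QQ p {i} v 0 + 1 / p ≤ 3 / 4 := by
  have h20 : (2 : ZMod p) ≠ 0 := by
    intro h
    have h' : ((2 : ℕ) : ZMod p) = 0 := by exact_mod_cast h
    rw [ZMod.natCast_eq_zero_iff] at h'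
    exact absurd (Nat.le_of_dvd (by norm_num) h') (by omega)
  have hp : (p : ℝ) ≠ 0 := by exact_mod_cast (Fact.out : p.Prime).ne_zero
  have e : ∀ x, PP p ∅ v x = if x = 0 then 1 else 0 := by
    intro x
    unfold PP Wt
    simp only [Finset.prod_empty, one_mul, cs_sum]
    split_ifs <;> simp [hp]
  rw [← PP_eq, ← insert_empty_eq, PP_insert p ∅ v i (by simp)]
  simp [e, hi, h20]

lemma inv_rpow_B (p : ℕ) (hp2 : 2 < p) (n : ℕ) :
    (1 / (p : ℝ)) ^ ((n : ℝ) / Real.log p) = Real.exp (-n) := by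
  have hp : 1 < (p : ℝ) := by exact_mod_cast (by omega : 1 < p)
  have hL := Real.log_pos hp
  rw [Real.rpow_def_of_pos (by positivity), one_div, Real.log_inv]
  congr 1
  field_simp

lemma prob_le_of_rpow (p : ℕ) (hp2 : 2 < p) (n : ℕ) (P x A : ℝ) (hP : 0 ≤ P)
    (hx : 1 / (p : ℝ) ≤ x) (h : P * x ^ ((n : ℝ) / Real.log p) ≤ A) : P ≤ Real.exp n * A := by
  have hp : 1 < (p : ℝ) := by exact_mod_cast (by omega : 1 < p)
  have hL := Real.log_pos hp
  have h1 : (1 / (p : ℝ)) ^ ((n : ℝ) / Real.log p) ≤ x ^ ((n : ℝ) / Real.log p) :=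
    Real.rpow_le_rpow (by positivity) hx (by positivity)
  rw [inv_rpow_B p hp2] at h1
  have h2 : P * Real.exp (-n) ≤ A := (mul_le_mul_of_nonneg_left h1 hP).trans h
  calc P = Real.exp n * (P * Real.exp (-n)) := by
        rw [mul_left_comm, ← Real.exp_add]; simp
    _ ≤ _ := mul_le_mul_of_nonneg_left h2 (Real.exp_pos _).le

lemma evt1_bound (p : ℕ) [Fact p.Prime] (hp2 : 2 < p) {n : ℕ} (lam : ZMod p) (m : ℕ)
    (J : ℕ) (hJ : 3 ≤ J) (S : Finset (Fin n)) :
    prob (fun ω => S.card ≤ m ∧ ∃ v : Fin n → ZMod p,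
      ((∀ i ∈ univ \ S, 2 * v i ∈ AA p S v (1 / 2 / 4 ^ J)) ∧
      ((AA p S v (1 / 2 / 4 ^ J)).card : ℝ) * 2 ^ J * (QQ p S v 0 + 1 / p) ≤ 4) ∧
      orthE p lam ((n : ℝ) / Real.log p) v ω) ≤
      (p : ℝ) ^ m * (Real.exp n * (8 / 2 ^ J) ^ (n - m)) := by
  classical
  have hp : 0 < (p : ℝ) := by exact_mod_cast (Fact.out : p.Prime).pos
  have hp1 : 1 ≤ (p : ℝ) := by exact_mod_cast (Fact.out : p.Prime).pos
  have hJ8 : (8 : ℝ) / 2 ^ J ≤ 1 := by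
    rw [div_le_one (by positivity)]
    calc (8 : ℝ) = 2 ^ 3 := by norm_num
      _ ≤ 2 ^ J := pow_le_pow_right₀ (by norm_num) hJ
  by_cases hS : S.card ≤ m
  swap
  · refine le_trans (b := 0) (le_of_eq ?_) (by positivity)
    rw [prob_eq]; simp [hS]
  set V : Finset (Fin n → ZMod p) := univ.filter fun v =>
    ((∀ i ∈ univ \ S, 2 * v i ∈ AA p S v (1 / 2 / 4 ^ J)) ∧
      ((AA p S v (1 / 2 / 4 ^ J)).card : ℝ) * 2 ^ J * (QQ p S v 0 + 1 / p) ≤ 4) with hV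
  refine (prob_mono (F := fun ω => ∃ v ∈ V, orthE p lam ((n : ℝ) / Real.log p) v ω) ?_).trans ?_
  · rintro ω ⟨_, v, h1, h2⟩
    exact ⟨v, by simp only [hV, Finset.mem_filter, Finset.mem_univ, true_and]; exact h1, h2⟩
  refine (prob_exists_mem V _).trans ?_
  have hfs := fiber_sum p hp2 S univ (Finset.subset_univ S) (1 / 2 / 4 ^ J) (by positivity) V
    (fun v hv => by
      simp only [hV, Finset.mem_filter, Finset.mem_univ, true_and] at hv; exact hv.1)
    (fun v => prob (orthE p lam ((n : ℝ) / Real.log p) v))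
    (Real.exp n * (8 / 2 ^ J) ^ (n - m)) (by positivity) ?_
  · refine hfs.trans (mul_le_mul_of_nonneg_right ?_ (by positivity))
    exact pow_le_pow_right₀ hp1 hS
  intro v hv
  simp only [hV, Finset.mem_filter, Finset.mem_univ, true_and] at hv
  have hc := hv.2
  set a : ℝ := ((AA p S v (1 / 2 / 4 ^ J)).card : ℝ)
  set q : ℝ := QQ p S v 0 + 1 / p with hq
  have hq0 : 1 / (p : ℝ) ≤ q := by have := QQ_pos p S v; linarith
  have hqpos : 0 < q := lt_of_lt_of_le (by positivity) hq0
  have h1 := orth_prob p lam v S q q ((n : ℝ) / Real.log p) hqpos (PP_zero_le p S v) le_rfl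
  have h2 := prob_le_of_rpow p hp2 n _ q _ (prob_nonneg _) hq0 h1
  have hcard : (univ \ S).card = n - S.card := by
    rw [← Finset.compl_eq_univ_sdiff, Finset.card_compl, Fintype.card_fin]
  have ha : 0 ≤ a := by positivity
  rw [hcard, Finset.card_univ, Fintype.card_fin, Nat.sub_self, pow_zero, mul_one]
  calc prob (orthE p lam ((n : ℝ) / Real.log p) v) * a ^ (n - S.card)
      ≤ (Real.exp n * (q + q) ^ (n - S.card)) * a ^ (n - S.card) :=
        mul_le_mul_of_nonneg_right h2 (by positivity)
    _ = Real.exp n * ((q + q) * a) ^ (n - S.card) := by rw [mul_pow]; ring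
    _ ≤ Real.exp n * (8 / 2 ^ J) ^ (n - S.card) := by
        refine mul_le_mul_of_nonneg_left ?_ (Real.exp_pos _).le
        refine pow_le_pow_left₀ (by positivity) ?_ _
        rw [le_div_iff₀ (by positivity)]
        nlinarith
    _ ≤ Real.exp n * (8 / 2 ^ J) ^ (n - m) := by
        refine mul_le_mul_of_nonneg_left ?_ (Real.exp_pos _).le
        exact pow_le_pow_of_le_one (by positivity) hJ8 (by omega)

lemma evt2_bound (p : ℕ) [Fact p.Prime] (hp2 : 4 ≤ p) {n : ℕ} (lam : ZMod p) (m : ℕ) (hmn : m ≤ n)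
    (SR : Finset (Fin n) × Finset (Fin n)) :
    prob (fun ω => (SR.1 ⊆ SR.2 ∧ SR.1.card ≤ m ∧ (n : ℝ) / 8 ≤ (SR.2 \ SR.1).card) ∧
      ∃ v : Fin n → ZMod p,
      ((∀ i ∈ SR.2 \ SR.1, 2 * v i ∈ AA p SR.1 v (1 / 2 / 4 ^ 100)) ∧
      ((AA p SR.1 v (1 / 2 / 4 ^ 100)).card : ℝ) * 2 ^ 100 ≤ 4 * p ∧
      ∃ S2 : Finset (Fin n), S2.card ≤ m ∧ QQ p S2 v 0 ≤ 1 / (p : ℝ) ^ 2) ∧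
      orthE p lam ((n : ℝ) / Real.log p) v ω) ≤
      (p : ℝ) ^ m * (Real.exp n * 4 ^ n * (p : ℝ) ^ m * Real.exp (- 8 * n)) := by
  classical
  obtain ⟨S, R⟩ := SR
  dsimp only
  have hp : 0 < (p : ℝ) := by exact_mod_cast (Fact.out : p.Prime).pos
  have hp1 : 1 ≤ (p : ℝ) := by exact_mod_cast (Fact.out : p.Prime).pos
  have hp4 : 4 ≤ (p : ℝ) := by exact_mod_cast hp2
  by_cases hS : (S ⊆ R ∧ S.card ≤ m ∧ (n : ℝ) / 8 ≤ (R \ S).card)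
  swap
  · refine le_trans (b := 0) (le_of_eq ?_) (by positivity)
    rw [prob_eq]; simp only [hS, false_and, Finset.filter_false, Finset.card_empty]; simp
  obtain ⟨hSR, hSm, hk⟩ := hS
  set V : Finset (Fin n → ZMod p) := univ.filter fun v =>
    ((∀ i ∈ R \ S, 2 * v i ∈ AA p S v (1 / 2 / 4 ^ 100)) ∧
      ((AA p S v (1 / 2 / 4 ^ 100)).card : ℝ) * 2 ^ 100 ≤ 4 * p ∧
      ∃ S2 : Finset (Fin n), S2.card ≤ m ∧ QQ p S2 v 0 ≤ 1 / (p : ℝ) ^ 2) with hV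
  refine (prob_mono (F := fun ω => ∃ v ∈ V, orthE p lam ((n : ℝ) / Real.log p) v ω) ?_).trans ?_
  · rintro ω ⟨_, v, h1, h2⟩
    exact ⟨v, by simp only [hV, Finset.mem_filter, Finset.mem_univ, true_and]; exact h1, h2⟩
  refine (prob_exists_mem V _).trans ?_
  have hfs := fiber_sum p (by omega) S R hSR (1 / 2 / 4 ^ 100) (by positivity) V
    (fun v hv => by
      simp only [hV, Finset.mem_filter, Finset.mem_univ, true_and] at hv; exact hv.1)
    (fun v => prob (orthE p lam ((n : ℝ) / Real.log p) v))
    (Real.exp n * 4 ^ n * (p : ℝ) ^ m * Real.exp (- 8 * n)) (by positivity) ?_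
  · refine hfs.trans (mul_le_mul_of_nonneg_right ?_ (by positivity))
    exact pow_le_pow_right₀ hp1 hSm
  intro v hv
  simp only [hV, Finset.mem_filter, Finset.mem_univ, true_and] at hv
  obtain ⟨_, hc, S2, hS2, hQ2⟩ := hv
  set a : ℝ := ((AA p S v (1 / 2 / 4 ^ 100)).card : ℝ)
  have ha : 0 ≤ a := by positivity
  have hq2 : QQ p S2 v 0 + 1 / p ≤ 2 / p := by
    have : 1 / (p : ℝ) ^ 2 ≤ 1 / p := by
      refine one_div_le_one_div_of_le hp ?_
      nlinarith
    have e : 2 / (p : ℝ) = 1 / p + 1 / p := by ring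
    linarith
  have h2p : 2 / (p : ℝ) ≤ 1 := by rw [div_le_one hp]; linarith
  have h1 := orth_prob p lam v S2 (2 / p) (2 / p) ((n : ℝ) / Real.log p) (by positivity) h2p hq2
  have h2 := prob_le_of_rpow p (by omega) n _ (2 / p) _ (prob_nonneg _)
    (div_le_div_of_nonneg_right (by norm_num) hp.le) h1
  have e4 : 2 / (p : ℝ) + 2 / p = 4 / p := by ring
  rw [e4] at h2
  have h41 : 4 / (p : ℝ) ≤ 1 := by rw [div_le_one hp]; linarith
  have h3 : (4 / (p : ℝ)) ^ (n - S2.card) ≤ 4 ^ n * (p : ℝ) ^ m / (p : ℝ) ^ n := by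
    calc (4 / (p : ℝ)) ^ (n - S2.card) ≤ (4 / (p : ℝ)) ^ (n - m) :=
          pow_le_pow_of_le_one (by positivity) h41 (by omega)
      _ = 4 ^ (n - m) / (p : ℝ) ^ (n - m) := div_pow _ _ _
      _ ≤ 4 ^ n / (p : ℝ) ^ (n - m) := by
          refine div_le_div_of_nonneg_right ?_ (by positivity)
          exact pow_le_pow_right₀ (by norm_num) (by omega)
      _ = 4 ^ n * (p : ℝ) ^ m / (p : ℝ) ^ n := by
          have : (p : ℝ) ^ n = (p : ℝ) ^ (n - m) * (p : ℝ) ^ m := by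
            rw [← pow_add]; congr 1; omega
          rw [this]; field_simp
  set k := (R \ S).card with hkdef
  have hRn : R.card ≤ n := by simpa using Finset.card_le_univ R
  have hkR : k ≤ R.card := Finset.card_le_card Finset.sdiff_subset
  have h4 : a ^ k * (p : ℝ) ^ (n - R.card) ≤ (4 / 2 ^ 100) ^ k * (p : ℝ) ^ n := by
    have ha2 : a ≤ 4 / 2 ^ 100 * p := by
      rw [div_mul_eq_mul_div, le_div_iff₀ (by positivity)]; exact hc
    calc a ^ k * (p : ℝ) ^ (n - R.card) ≤ (4 / 2 ^ 100 * p) ^ k * (p : ℝ) ^ (n - R.card) :=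
          mul_le_mul_of_nonneg_right (pow_le_pow_left₀ ha ha2 k) (by positivity)
      _ = (4 / 2 ^ 100) ^ k * (p : ℝ) ^ (k + (n - R.card)) := by
          rw [mul_pow, pow_add]; ring
      _ ≤ _ := by
          refine mul_le_mul_of_nonneg_left ?_ (by positivity)
          exact pow_le_pow_right₀ hp1 (by omega)
  have h5 : ((4 : ℝ) / 2 ^ 100) ^ k ≤ Real.exp (-8 * n) := by
    have hb : (4 : ℝ) / 2 ^ 100 ≤ Real.exp (-64) := by
      have : Real.exp 64 ≤ 2 ^ 98 := by
        have h1 : Real.exp 64 = (Real.exp 1) ^ 64 := by rw [← Real.exp_nat_mul]; norm_num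
        rw [h1]
        calc (Real.exp 1) ^ 64 ≤ (2.7182818286 : ℝ) ^ 64 :=
              pow_le_pow_left₀ (Real.exp_pos _).le Real.exp_one_lt_d9.le _
          _ ≤ 2 ^ 98 := by norm_num
      rw [Real.exp_neg, div_le_iff₀ (by positivity), inv_mul_eq_div, le_div_iff₀ (Real.exp_pos _)]
      linarith
    calc ((4 : ℝ) / 2 ^ 100) ^ k ≤ Real.exp (-64) ^ k := pow_le_pow_left₀ (by positivity) hb k
      _ = Real.exp (k * (-64)) := by rw [← Real.exp_nat_mul]
      _ ≤ _ := Real.exp_le_exp.mpr (by linarith)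
  calc prob (orthE p lam ((n : ℝ) / Real.log p) v) * (a ^ k * (p : ℝ) ^ (n - R.card))
      ≤ (Real.exp n * (4 ^ n * (p : ℝ) ^ m / (p : ℝ) ^ n)) * (Real.exp (-8 * n) * (p : ℝ) ^ n) := by
        refine mul_le_mul (h2.trans (mul_le_mul_of_nonneg_left h3 (Real.exp_pos _).le))
          (h4.trans (mul_le_mul_of_nonneg_right h5 (by positivity))) (by positivity) (by positivity)
    _ = _ := by field_simp

lemma evt0_bound (p : ℕ) [Fact p.Prime] (hp2 : 2 < p) {n : ℕ} (lam : ZMod p) (m : ℕ) :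
    prob (fun ω => ∃ v : Fin n → ZMod p,
      (v ≠ 0 ∧ (univ.filter fun i => v i ≠ 0).card ≤ m) ∧
      orthE p lam ((n : ℝ) / Real.log p) v ω) ≤
      ((101 / 100 : ℝ) ^ n * (100 * p) ^ m) *
        ((100 : ℝ) ^ ((n : ℝ) / Real.log p) * (76 / 100) ^ (n - 1)) := by
  classical
  set V : Finset (Fin n → ZMod p) := univ.filter fun v =>
    (v ≠ 0 ∧ (univ.filter fun i => v i ≠ 0).card ≤ m) with hV
  refine (prob_mono (F := fun ω => ∃ v ∈ V, orthE p lam ((n : ℝ) / Real.log p) v ω) ?_).trans ?_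
  · rintro ω ⟨v, h1, h2⟩
    exact ⟨v, by simp only [hV, Finset.mem_filter, Finset.mem_univ, true_and]; exact h1, h2⟩
  refine (prob_exists_mem V _).trans ?_
  have hc := sparse_count p m V (fun v hv => by
    simp only [hV, Finset.mem_filter, Finset.mem_univ, true_and] at hv; exact hv.2)
  refine (Finset.sum_le_card_nsmul V _
    ((100 : ℝ) ^ ((n : ℝ) / Real.log p) * (76 / 100) ^ (n - 1)) fun v hv => ?_).trans ?_
  · simp only [hV, Finset.mem_filter, Finset.mem_univ, true_and] at hv
    obtain ⟨i, hi⟩ := Function.ne_iff.mp hv.1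
    have h1 := orth_prob p lam v {i} (1 / 100) (3 / 4) ((n : ℝ) / Real.log p) (by norm_num)
      (by norm_num) (PP_single p hp2 v i hi)
    rw [Finset.card_singleton] at h1
    rw [one_div, Real.inv_rpow (by norm_num), ← div_eq_mul_inv, div_le_iff₀ (by positivity)] at h1
    rw [mul_comm]
    refine h1.trans (le_of_eq ?_)
    norm_num
  · rw [nsmul_eq_mul]
    exact mul_le_mul_of_nonneg_right hc (by positivity)

set_option exponentiation.threshold 2000

lemma num_ev0 (n m p : ℕ) (hL : 138 ≤ Real.log p) (hmL : (m : ℝ) * Real.log p ≤ n / 1000)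
    (hn : (1000 : ℝ) ≤ n) (hp : (100 : ℝ) ≤ p) :
    (((101 : ℝ) / 100) ^ n * (100 * (p : ℝ)) ^ m) *
      ((100 : ℝ) ^ ((n : ℝ) / Real.log p) * ((76 : ℝ) / 100) ^ (n - 1))
      ≤ Real.exp (-(n : ℝ) / 9 - 2) := by
  have hp0 : (0 : ℝ) < p := by linarith
  have hn1 : 1 ≤ n := by
    have : (1 : ℝ) ≤ n := by linarith
    exact_mod_cast this
  have a1 : ((101 : ℝ) / 100) ^ n ≤ Real.exp (n * (1 / 100)) := by
    rw [Real.exp_nat_mul]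
    exact pow_le_pow_left₀ (by norm_num) (by linarith [Real.add_one_le_exp (1 / 100 : ℝ)]) n
  have a2 : (100 * (p : ℝ)) ^ m ≤ Real.exp (m * (2 * Real.log p)) := by
    rw [Real.exp_nat_mul]
    refine pow_le_pow_left₀ (by positivity) ?_ m
    rw [two_mul, Real.exp_add, Real.exp_log hp0]
    nlinarith
  have a3 : (100 : ℝ) ^ ((n : ℝ) / Real.log p) ≤ Real.exp (4.9 * (n / 138)) := by
    rw [Real.rpow_def_of_pos (by norm_num)]
    refine Real.exp_le_exp.mpr ?_
    have h1 : Real.log 100 ≤ 4.9 := by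
      have : Real.log 100 ≤ Real.log (2 ^ 7) := Real.log_le_log (by norm_num) (by norm_num)
      rw [Real.log_pow] at this
      push_cast at this
      linarith [Real.log_two_lt_d9]
    have h2 : (n : ℝ) / Real.log p ≤ n / 138 := by gcongr
    have h0 : 0 ≤ (n : ℝ) / Real.log p := by
      have : 0 ≤ Real.log p := by linarith
      positivity
    exact mul_le_mul h1 h2 h0 (by norm_num)
  have a4 : ((76 : ℝ) / 100) ^ (n - 1) ≤ Real.exp (((n - 1 : ℕ) : ℝ) * (-(24 / 100))) := by
    rw [Real.exp_nat_mul]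
    exact pow_le_pow_left₀ (by norm_num) (by linarith [Real.add_one_le_exp (-(24 / 100) : ℝ)]) _
  calc _ ≤ (Real.exp (n * (1 / 100)) * Real.exp (m * (2 * Real.log p))) *
        (Real.exp (4.9 * (n / 138)) * Real.exp (((n - 1 : ℕ) : ℝ) * (-(24 / 100)))) := by
        gcongr
    _ ≤ _ := by
        rw [← Real.exp_add, ← Real.exp_add, ← Real.exp_add]
        refine Real.exp_le_exp.mpr ?_
        rw [Nat.cast_sub hn1]
        push_cast
        linarith

lemma pm_le (n m p : ℕ) (hp0 : (0 : ℝ) < p) (hmL : (m : ℝ) * Real.log p ≤ n / 1000) :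
    (p : ℝ) ^ m ≤ Real.exp (n / 1000) := by
  calc (p : ℝ) ^ m = Real.exp (m * Real.log p) := by
        rw [Real.exp_nat_mul, Real.exp_log hp0]
    _ ≤ _ := Real.exp_le_exp.mpr hmL

lemma two_le_exp7 : (2 : ℝ) ≤ Real.exp (7 / 10) := by
  rw [← Real.log_le_iff_le_exp (by norm_num)]
  linarith [Real.log_two_lt_d9]

lemma num_ev1 (n m p : ℕ) (hp0 : (0 : ℝ) < p) (hmL : (m : ℝ) * Real.log p ≤ n / 1000)
    (hm : (m : ℝ) ≤ n / 1000)
    (hn : (1000 : ℝ) ≤ n) :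
    (2 : ℝ) ^ n * ((p : ℝ) ^ m * (Real.exp n * (8 / 2 ^ 100) ^ (n - m)))
      ≤ Real.exp (-(n : ℝ) / 9 - 2) := by
  have hmn : m ≤ n := by
    have : (m : ℝ) ≤ n := by linarith
    exact_mod_cast this
  have a1 : (2 : ℝ) ^ n ≤ Real.exp (n * (7 / 10)) := by
    rw [Real.exp_nat_mul]
    exact pow_le_pow_left₀ (by norm_num) two_le_exp7 n
  have a2 := pm_le n m p hp0 hmL
  have a3 : ((8 : ℝ) / 2 ^ 100) ^ (n - m) ≤ Real.exp (((n - m : ℕ) : ℝ) * (-10)) := by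
    rw [Real.exp_nat_mul]
    refine pow_le_pow_left₀ (by norm_num) ?_ _
    rw [Real.exp_neg, le_inv_comm₀ (by norm_num) (Real.exp_pos _)]
    have : Real.exp 10 = Real.exp 1 ^ 10 := by rw [← Real.exp_nat_mul]; norm_num
    rw [this]
    calc Real.exp 1 ^ 10 ≤ 3 ^ 10 :=
          pow_le_pow_left₀ (Real.exp_pos _).le (by linarith [Real.exp_one_lt_d9]) _
      _ ≤ _ := by norm_num
  calc _ ≤ Real.exp (n * (7 / 10)) * (Real.exp (n / 1000) *
        (Real.exp n * Real.exp (((n - m : ℕ) : ℝ) * (-10)))) := by gcongr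
    _ ≤ _ := by
        rw [← Real.exp_add, ← Real.exp_add, ← Real.exp_add]
        refine Real.exp_le_exp.mpr ?_
        rw [Nat.cast_sub hmn]
        linarith

lemma num_ev2 (n m p : ℕ) (hp0 : (0 : ℝ) < p) (hmL : (m : ℝ) * Real.log p ≤ n / 1000)
    (hn : (1000 : ℝ) ≤ n) :
    ((2 : ℝ) ^ n * 2 ^ n) *
      ((p : ℝ) ^ m * (Real.exp n * 4 ^ n * (p : ℝ) ^ m * Real.exp (-8 * n)))
      ≤ Real.exp (-(n : ℝ) / 9 - 2) := by
  have a1 : (2 : ℝ) ^ n ≤ Real.exp (n * (7 / 10)) := by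
    rw [Real.exp_nat_mul]
    exact pow_le_pow_left₀ (by norm_num) two_le_exp7 n
  have a4 : (4 : ℝ) ^ n ≤ Real.exp (n * (7 / 10)) * Real.exp (n * (7 / 10)) := by
    have : (4 : ℝ) ^ n = 2 ^ n * 2 ^ n := by rw [← mul_pow]; norm_num
    rw [this]; gcongr
  have a2 := pm_le n m p hp0 hmL
  calc _ ≤ (Real.exp (n * (7 / 10)) * Real.exp (n * (7 / 10))) * (Real.exp (n / 1000) *
        (Real.exp n * (Real.exp (n * (7 / 10)) * Real.exp (n * (7 / 10))) * Real.exp (n / 1000)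
          * Real.exp (-8 * n))) := by gcongr
    _ ≤ _ := by
        simp only [← Real.exp_add]
        refine Real.exp_le_exp.mpr ?_
        linarith

lemma three_exp (x : ℝ) : Real.exp (x - 2) + Real.exp (x - 2) + Real.exp (x - 2) ≤ Real.exp x := by
  have h : Real.exp x = Real.exp (x - 2) * Real.exp 2 := by rw [← Real.exp_add]; congr 1; ring
  have h2 := Real.add_one_le_exp (2 : ℝ)
  have := Real.exp_pos (x - 2)
  rw [h]; nlinarith

lemma scale (n p m : ℕ) (hp2 : 2 < p)
    (hp : (p : ℝ) ≤ Real.exp ((1 / 2 ^ 300 : ℝ) * (n : ℝ) ^ ((1 : ℝ) / 4)))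
    (hm : m = ⌈(2 ^ 400 : ℝ) * Real.log p⌉₊) :
    1 ≤ Real.log p ∧ 1 ≤ m ∧ (2 ^ 400 : ℝ) * Real.log p ≤ m ∧ (1000 : ℝ) ≤ n ∧
      (m : ℝ) * Real.log p ≤ n / 1000 ∧ (m : ℝ) ≤ n / 1000 := by
  have hp3 : (3 : ℝ) ≤ p := by exact_mod_cast hp2
  have hL : 1 ≤ Real.log p := by
    rw [Real.le_log_iff_exp_le (by linarith)]
    linarith [Real.exp_one_lt_d9]
  have hL2 : Real.log p ≤ (1 / 2 ^ 300 : ℝ) * (n : ℝ) ^ ((1 : ℝ) / 4) := by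
    rw [Real.log_le_iff_le_exp (by linarith)]; exact hp
  set L := Real.log p
  set y := (n : ℝ) ^ ((1 : ℝ) / 4) with hy
  have hy4 : y ^ 4 = n := by
    rw [hy, ← Real.rpow_natCast, ← Real.rpow_mul (by positivity)]; norm_num
  have hy1 : (2 ^ 300 : ℝ) ≤ y := by
    have : 1 ≤ 1 / 2 ^ 300 * y := hL.trans hL2
    rwa [one_div, inv_mul_eq_div, le_div_iff₀ (by positivity), one_mul] at this
  have hm1 : (2 ^ 400 : ℝ) * L ≤ m := by rw [hm]; exact Nat.le_ceil _
  have hm2 : (m : ℝ) ≤ 2 ^ 400 * L + 1 := by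
    rw [hm]; exact (Nat.ceil_lt_add_one (by positivity)).le
  have hm3 : (m : ℝ) ≤ 2 ^ 401 * L := by
    have : (1 : ℝ) ≤ 2 ^ 400 * L := by nlinarith
    rw [pow_succ]; linarith
  have hyy : y ^ 2 * 1 ≤ y ^ 2 * y ^ 2 := by
    have : 1 ≤ y ^ 2 := by nlinarith
    gcongr
  have hn : y ^ 2 ≤ n := by rw [← hy4]; linarith
  have hmL : (m : ℝ) * L ≤ n / 1000 := by
    calc (m : ℝ) * L ≤ 2 ^ 401 * L * L := by gcongr
      _ ≤ 2 ^ 401 * (1 / 2 ^ 300 * y) * (1 / 2 ^ 300 * y) := by gcongr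
      _ = (2 ^ 401 * (1 / 2 ^ 300) * (1 / 2 ^ 300)) * y ^ 2 := by ring
      _ ≤ 1 / 1000 * n := by
          gcongr
          norm_num
      _ = _ := by ring
  have hmn : (m : ℝ) ≤ n / 1000 := by
    refine le_trans ?_ hmL
    nlinarith [Nat.cast_nonneg (α := ℝ) m]
  have hmr : (1 : ℝ) ≤ m := by nlinarith
  refine ⟨hL, by exact_mod_cast hmr, hm1, ?_, hmL, hmn⟩
  linarith

lemma cover (p : ℕ) [Fact p.Prime] (hp2 : 2 < p) {n : ℕ} (lam : ZMod p) (m : ℕ)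
    (hm1 : 1 ≤ m) (hmC : (2 ^ 400 : ℝ) * Real.log p ≤ m) (hn : (1000 : ℝ) ≤ n)
    (hmn : (m : ℝ) ≤ n / 1000) (hL : 1 ≤ Real.log p)
    (ω : Fin n → Fin n → Bool) (v : Fin n → ZMod p) (hv : v ≠ 0)
    (ho : orthE p lam ((n : ℝ) / Real.log p) v ω)
    (T : Finset (Fin n)) (hT : T.card = ⌈(n : ℝ) / 4⌉₊)
    (hno : ¬ ∃ 𝒮 : Finset (Finset (Fin n)),
        (𝒮 : Set (Finset (Fin n))).PairwiseDisjoint id ∧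
        (∀ S ∈ 𝒮, S.card = m ∧ Disjoint S T ∧
          disc p (fun i : S => v i) ≤ 2 ^ 400 / (p : ℝ) ^ 2) ∧
        (n : ℝ) / (2 * m) ≤ (𝒮.card : ℝ)) :
    (2 ^ 200 : ℝ) < p ∧
    ((∃ v : Fin n → ZMod p, (v ≠ 0 ∧ (univ.filter fun i => v i ≠ 0).card ≤ m) ∧
        orthE p lam ((n : ℝ) / Real.log p) v ω) ∨
     (∃ S : Finset (Fin n), S.card ≤ m ∧ ∃ v : Fin n → ZMod p,
        ((∀ i ∈ univ \ S, 2 * v i ∈ AA p S v (1 / 2 / 4 ^ 100)) ∧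
          ((AA p S v (1 / 2 / 4 ^ 100)).card : ℝ) * 2 ^ 100 * (QQ p S v 0 + 1 / p) ≤ 4) ∧
        orthE p lam ((n : ℝ) / Real.log p) v ω) ∨
     (∃ SR : Finset (Fin n) × Finset (Fin n),
        (SR.1 ⊆ SR.2 ∧ SR.1.card ≤ m ∧ (n : ℝ) / 8 ≤ ((SR.2 \ SR.1).card : ℝ)) ∧
        ∃ v : Fin n → ZMod p,
        ((∀ i ∈ SR.2 \ SR.1, 2 * v i ∈ AA p SR.1 v (1 / 2 / 4 ^ 100)) ∧
          ((AA p SR.1 v (1 / 2 / 4 ^ 100)).card : ℝ) * 2 ^ 100 ≤ 4 * p ∧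
          ∃ S2 : Finset (Fin n), S2.card ≤ m ∧ QQ p S2 v 0 ≤ 1 / (p : ℝ) ^ 2) ∧
        orthE p lam ((n : ℝ) / Real.log p) v ω)) := by
  have hp0 : (0 : ℝ) < p := by exact_mod_cast (Fact.out : p.Prime).pos
  obtain ⟨R, hR, hRS⟩ := chunk T m hm1 (fun S => disc p (fun i : S => v i) ≤ 2 ^ 400 / (p : ℝ) ^ 2) hno
  have hTr : (T.card : ℝ) ≤ n / 4 + 1 := by
    rw [hT]; exact (Nat.ceil_lt_add_one (by positivity)).le
  have hRm : m ≤ R.card := by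
    have : (m : ℝ) ≤ R.card := by linarith
    exact_mod_cast this
  have hbig : (2 ^ 200 : ℝ) < p := by
    by_contra hcon
    push Not at hcon
    obtain ⟨S, hS, hc⟩ := Finset.exists_subset_card_eq hRm
    refine hRS S hS hc ?_
    refine (disc_bound p S v).trans ((QQ_mono p (Finset.empty_subset S) v).trans
      ((QQ_empty_le p v).trans ?_))
    rw [le_div_iff₀ (by positivity), one_mul]
    calc (p : ℝ) ^ 2 ≤ (2 ^ 200) ^ 2 := by gcongr
      _ = 2 ^ 400 := by rw [← pow_mul]
  refine ⟨hbig, ?_⟩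
  have hη : (0 : ℝ) < 1 / 2 / 4 ^ 100 := by positivity
  have hη1 : (1 : ℝ) / 2 / 4 ^ 100 ≤ 1 := by norm_num
  have hk : 8 / (1 / 2 / 4 ^ 100 : ℝ) * Real.log p ≤ m := by
    refine le_trans ?_ hmC
    have : 8 / (1 / 2 / 4 ^ 100 : ℝ) ≤ 2 ^ 400 := by norm_num
    gcongr
  obtain ⟨S, hS, hSc, h⟩ := greedy p R v _ hη hη1 m hk
  have hstuck : ∀ i ∈ R \ S, 2 * v i ∈ AA p S v (1 / 2 / 4 ^ 100) := by
    rcases h with h | h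
    · exfalso
      obtain ⟨S', h1, h2, h3⟩ := Finset.exists_subsuperset_card_eq hS hSc hRm
      refine hRS S' h2 h3 ?_
      refine (disc_bound p S' v).trans ((QQ_mono p h1 v).trans (h.trans ?_))
      gcongr
      norm_num
    · exact h
  obtain ⟨S2, -, hS2c, h2⟩ := greedy p univ v _ hη hη1 m hk
  rcases h2 with h2 | h2
  · right; right
    refine ⟨(S, R), ⟨hS, hSc, ?_⟩, v, ⟨hstuck, ?_, S2, hS2c, h2⟩, ho⟩
    · have e := Finset.card_sdiff_add_card_eq_card hS
      have e' : ((R \ S).card : ℝ) + S.card = R.card := by exact_mod_cast e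
      have hSr : (S.card : ℝ) ≤ m := by exact_mod_cast hSc
      show (n : ℝ) / 8 ≤ ((R \ S).card : ℝ)
      linarith
    · show ((AA p S v (1 / 2 / 4 ^ 100)).card : ℝ) * 2 ^ 100 ≤ 4 * p
      rcases AA_card p S v 100 with h1 | h1
      · rw [h1]
        have : (2 ^ 100 : ℝ) ≤ 2 ^ 200 := by norm_num
        push_cast
        linarith
      · have hq := QQ_pos p S v
        set a := ((AA p S v (1 / 2 / 4 ^ 100)).card : ℝ) * 2 ^ 100
        have ha : 0 ≤ a := by positivity
        have h3 : a * (1 / p) ≤ 4 := by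
          refine le_trans ?_ h1
          gcongr
          linarith
        rwa [mul_one_div, div_le_iff₀ hp0] at h3
  · rcases AA_card p S2 v 100 with h1 | h1
    · left
      refine ⟨v, ⟨hv, ?_⟩, ho⟩
      refine (Finset.card_le_card ?_).trans hS2c
      intro i hi
      simp only [Finset.mem_filter, Finset.mem_univ, true_and] at hi
      by_contra hiS
      have h3 := h2 i (by simp [hiS])
      obtain ⟨a, ha⟩ := Finset.card_eq_one.mp h1
      have h0 := zero_mem_AA p S2 v hη.le
      rw [ha, Finset.mem_singleton] at h0 h3
      rw [← h0] at h3
      rcases mul_eq_zero.mp h3 with h4 | h4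
      · have : ((2 : ℕ) : ZMod p) = 0 := by exact_mod_cast h4
        rw [ZMod.natCast_eq_zero_iff] at this
        exact absurd (Nat.le_of_dvd (by norm_num) this) (by omega)
      · exact hi h4
    · right; left
      exact ⟨S2, hS2c, v, ⟨h2, h1⟩, ho⟩

/-- Main structure theorem: with probability at least `1 - exp(-n/9)`, every
nonzero vector orthogonal to at least `n - n/log p` rows of `M_n - λ I_n`
satisfies property (†): for every `T` of size `⌈n/4⌉` there are at least `n/(2m)`
pairwise disjoint sets `S ⊆ [n] \ T` of size `m = ⌈C log p⌉` with
`disc(v|_S) ≤ C/p²`. -/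
theorem structure_theorem_many_chunks :
    ∃ c C : ℝ, 0 < c ∧ 0 < C ∧ ∃ n₀ : ℕ, ∀ n : ℕ, n₀ ≤ n →
      ∀ p : ℕ, p.Prime → 2 < p →
        (p : ℝ) ≤ Real.exp (c * (n : ℝ) ^ ((1 : ℝ) / 4)) →
        ∀ lam : ZMod p, ∀ m : ℕ, m = ⌈C * Real.log p⌉₊ →
          prob (fun ω : Fin n → Fin n → Bool =>
              ∀ v : Fin n → ZMod p, v ≠ 0 →
                (n : ℝ) - (n : ℝ) / Real.log p ≤
                  ({i | ((symMat (ZMod p) ω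
                    - lam • (1 : Matrix (Fin n) (Fin n) (ZMod p))) *ᵥ v) i = 0}.ncard : ℝ) →
                ∀ T : Finset (Fin n), T.card = ⌈(n : ℝ) / 4⌉₊ →
                  ∃ 𝒮 : Finset (Finset (Fin n)),
                    (𝒮 : Set (Finset (Fin n))).PairwiseDisjoint id ∧
                    (∀ S ∈ 𝒮, S.card = m ∧ Disjoint S T ∧
                      disc p (fun i : S => v i) ≤ C / (p : ℝ) ^ 2) ∧
                    (n : ℝ) / (2 * m) ≤ (𝒮.card : ℝ))
            ≥ 1 - Real.exp (-(n : ℝ) / 9) := by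
  refine ⟨1 / 2 ^ 300, 2 ^ 400, by positivity, by positivity, 1, ?_⟩
  intro n _ p hpp hp2 hple lam m hm
  have : Fact p.Prime := ⟨hpp⟩
  obtain ⟨hL, hm1, hmC, hn, hmL, hmn⟩ := scale n p m hp2 hple hm
  have hp0 : (0 : ℝ) < p := by exact_mod_cast hpp.pos
  rw [prob_not]
  refine sub_le_sub_left ?_ 1
  by_cases hbig : (2 ^ 200 : ℝ) < p
  · have hp100 : (100 : ℝ) ≤ p := le_trans (by norm_num) hbig.le
    have hp4 : 4 ≤ p := by
      have : (4 : ℝ) ≤ p := by linarith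
      exact_mod_cast this
    have hmn' : m ≤ n := by
      have : (m : ℝ) ≤ n := by linarith
      exact_mod_cast this
    have hL138 : 138 ≤ Real.log p := by
      have h1 : Real.log (2 ^ 200) ≤ Real.log p := Real.log_le_log (by positivity) hbig.le
      rw [Real.log_pow] at h1
      push_cast at h1
      linarith [Real.log_two_gt_d9]
    refine le_trans (prob_mono (fun ω hω => ?_)) (le_trans (prob_or _ _) (le_trans
      (add_le_add (evt0_bound p hp2 lam m) (le_trans (prob_or _ _) (add_le_add
        (prob_exists_card _ _ (evt1_bound p hp2 lam m 100 (by norm_num)))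
        (prob_exists_card _ _ (evt2_bound p hp4 lam m hmn'))))) ?_))
    · push Not at hω
      obtain ⟨v, hv, ho, T, hT, hno⟩ := hω
      refine (cover p hp2 lam m hm1 hmC hn hmn hL ω v hv ho T hT ?_).2
      rintro ⟨F, h1, h2, h3⟩
      exact absurd h3 (not_le.mpr (hno F h1 h2))
    · have e0 := num_ev0 n m p hL138 hmL hn hp100
      have e1 := num_ev1 n m p hp0 hmL hmn hn
      have e2 := num_ev2 n m p hp0 hmL hn
      have e3 := three_exp (-(n : ℝ) / 9)
      simp only [Fintype.card_prod, Fintype.card_finset, Fintype.card_fin]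
      push_cast
      linarith
  · refine le_trans (prob_mono (F := fun _ => False) (fun ω hω => ?_)) ?_
    · push Not at hω
      obtain ⟨v, hv, ho, T, hT, hno⟩ := hω
      refine hbig (cover p hp2 lam m hm1 hmC hn hmn hL ω v hv ho T hT ?_).1
      rintro ⟨F, h1, h2, h3⟩
      exact absurd h3 (not_le.mpr (hno F h1 h2))
    · have : prob (fun _ : Fin n → Fin n → Bool => False) = 0 := by simp [prob]
      rw [this]; positivity
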